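/- In oriented percolation, for every N ≥ 1, the sum of the lace-expansion coefficient π_p^{(N)} over all x is bounded via the diagrammatic estimate: Σ_x π_p^{(N)}(x) m^{τ_x} ≤ (1 + 2T_p^{(m)}) (2T_p^{(m)})^{N-1} T_p^{(m)}, where T_p^{(m)} is the m-weighted open triangle diagram. -/

import Mathlib

/-!
The events `E(b, x; C̃^b(y))` are unfolded along occupied paths. Since time advances by one along
every occupied bond, paths may be indexed by time, and a Menger-type argument (`menger`) turns the
condition on pivotal bonds into two bond-disjoint paths: one from `y` to `x` avoiding `b`, the other
from the top of `b` to `x`. Gluing these along the chain of events (`chain_DF`, `chain_first`)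
shows that on the lace event some ladder diagram is occupied, its lines using disjoint bonds;
each rung hangs from the last vertex where it meets one of the two sides.
The BK inequality (`bk`), proved here for events of the form: some finite bond set of a given
family is occupied, by induction on the number of bonds and passage to the limit, bounds the probability of
a diagram by a product of two-point functions `φ` and `q * φ`. Thus (`sum_piCoef_le`) the weighted
sum of `π^{(N)}` is controlled by iterates `lad` of an operator whose kernel is made of weighted
bubbles `B(r)` built from two lines `q * φ`.

The row sums `∑ s, φ s * B (r - s)` are at most the open triangle `T`, but the ladder also contains
the crossed kernel `B (r + s)`, which is not directly an open triangle. Tilting by `S = √M`, where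
`M z = m ^ τ_z`, turns `B` into the autocorrelation of `f = (q * φ) S`, an even function, and both
kernels factor as products of shift kernels `f (u ± r)`. The Schur test then gives norm at most `T`
on `ℓ²(φ)` for both (`norm_sub_op`, `norm_add_op`), so that each step of the ladder costs `2T`
(`norm_lad_le`). In the last step the Cauchy–Schwarz estimates lose a little; this is compensated
by the term `s = 0` of the ladder operator, which occurs once and not twice (`lad_total_le`).
-/


open MeasureTheory
open scoped ENNReal

/-- Space-time vertices of oriented percolation on `ℤ^d × ℤ`. -/
abbrev Vert (d : ℕ) := (Fin d → ℤ) × ℤ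
/-- Oriented bonds. -/
abbrev Bond (d : ℕ) := Vert d × Vert d
/-- Bond configurations. -/
abbrev Config (d : ℕ) := Bond d → Bool

variable {d : ℕ}

/-- The bond `b` is occupied in `ω`. -/
def Occ (ω : Config d) (b : Bond d) : Prop := ω b = true

/-- `Conn ω u x`: `u → x`, i.e. there is a path of occupied oriented bonds from `u` to `x`. -/
inductive Conn (ω : Config d) : Vert d → Vert d → Prop
  | refl (v : Vert d) : Conn ω v v
  | step {u v w : Vert d} : Occ ω (u, v) → Conn ω v w → Conn ω u w

/-- The connection event `{u → x}`. -/
def connEvent (u x : Vert d) : Set (Config d) := {ω | Conn ω u x}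

/-- The event `{b → x}`: `b` is occupied and its top endpoint is connected to `x`. -/
def bondConnEvent (b : Bond d) (x : Vert d) : Set (Config d) :=
  {ω | Occ ω b ∧ Conn ω b.2 x}

/-- `E` occurs on the bond set `B` in configuration `ω`. -/
def OccursOn (E : Set (Config d)) (B : Set (Bond d)) (ω : Config d) : Prop :=
  ∀ ω' : Config d, (∀ b ∈ B, ω' b = ω b) → ω' ∈ E

/-- Disjoint occurrence `E₁ ∘ E₂`. -/
def DisjOcc (E₁ E₂ : Set (Config d)) : Set (Config d) :=
  {ω | ∃ B₁ B₂ : Set (Bond d), Disjoint B₁ B₂ ∧ OccursOn E₁ B₁ ω ∧ OccursOn E₂ B₂ ω}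

/-- Triple disjoint occurrence `E₁ ∘ E₂ ∘ E₃`. -/
def DisjOcc3 (E₁ E₂ E₃ : Set (Config d)) : Set (Config d) :=
  {ω | ∃ B₁ B₂ B₃ : Set (Bond d), Disjoint B₁ B₂ ∧ Disjoint B₁ B₃ ∧ Disjoint B₂ B₃ ∧
    OccursOn E₁ B₁ ω ∧ OccursOn E₂ B₂ ω ∧ OccursOn E₃ B₃ ω}

/-- The double-connection event `{u ⇒ v}`: two bond-disjoint occupied paths from `u` to `v`. -/
def DoubleConn (u v : Vert d) : Set (Config d) := DisjOcc (connEvent u v) (connEvent u v)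

/-- Configuration with the status of bond `b` set to `val`. -/
def flipBond (ω : Config d) (b : Bond d) (val : Bool) : Config d :=
  fun b' => if b' = b then val else ω b'

/-- `b ∈ piv(v, x)`: `b` is pivotal for `{v → x}` in `ω`. -/
def Pivotal (ω : Config d) (b : Bond d) (v x : Vert d) : Prop :=
  Conn (flipBond ω b true) v x ∧ ¬ Conn (flipBond ω b false) v x

/-- Connection avoiding the bond `b`. -/
inductive ConnAvoid (ω : Config d) (b : Bond d) : Vert d → Vert d → Prop
  | refl (v : Vert d) : ConnAvoid ω b v v
  | step {u v w : Vert d} : (u, v) ≠ b → Occ ω (u, v) → ConnAvoid ω b v w →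
      ConnAvoid ω b u w

/-- `C̃^b(y)`: vertices reachable from `y` without using the bond `b`. -/
def tilC (ω : Config d) (b : Bond d) (y : Vert d) : Set (Vert d) :=
  {x | ConnAvoid ω b y x}

/-- The lace-expansion event `E(b, x; C̃^b(y))`: `b → x` with `x ∈ C̃^b(y)` and no pivotal
bond for `{b̄ → x}` has its bottom endpoint in `C̃^b(y)`. -/
def Eevent (b : Bond d) (x y : Vert d) : Set (Config d) :=
  {ω | Occ ω b ∧ Conn ω b.2 x ∧ x ∈ tilC ω b y ∧
    ∀ b' : Bond d, Pivotal ω b' b.2 x → b'.1 ∉ tilC ω b y}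
/-- `μ` is the law of oriented percolation with bond-occupation kernel `q`: a probability
measure under which bonds are independently occupied, bond `(u,v)` with probability
`q u v`, and only bonds pointing one step forward in time may be occupied. -/
def IsBernoulliField (μ : Measure (Config d)) (q : Vert d → Vert d → ℝ≥0∞) : Prop :=
  IsProbabilityMeasure μ ∧ (∀ u v : Vert d, q u v ≤ 1) ∧
  (∀ u v : Vert d, v.2 ≠ u.2 + 1 → q u v = 0) ∧
  ∀ (s : Finset (Bond d)) (f : Bond d → Bool),
    μ {ω | ∀ b ∈ s, ω b = f b} =
      ∏ b ∈ s, (if f b then q b.1 b.2 else 1 - q b.1 b.2)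

/-- The lace-expansion event `Ẽ^{(N)}_{b⃗}(x)` (for `N ≥ 1`), with `b̲_{N+1} = x` and
`b̄₀ = o`. -/
def laceEvent (N : ℕ) (bb : Fin N → Bond d) (x : Vert d) : Set (Config d) :=
  {ω | (∀ h0 : 0 < N, ω ∈ DoubleConn (0 : Vert d) (bb ⟨0, h0⟩).1) ∧
    ∀ i : Fin N, ω ∈ Eevent (bb i)
      (if h : i.1 + 1 < N then (bb ⟨i.1 + 1, h⟩).1 else x)
      (if h : 0 < i.1 then
        (bb ⟨i.1 - 1, lt_of_le_of_lt (Nat.sub_le _ _) i.isLt⟩).2 else (0 : Vert d))}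

/-- The lace-expansion coefficients `π_p^{(N)}(x)`. -/
noncomputable def piCoef (μ : Measure (Config d)) : ℕ → Vert d → ℝ≥0∞
  | 0, x => μ (DoubleConn 0 x)
  | (N + 1), x => ∑' bb : Fin (N + 1) → Bond d, μ (laceEvent (N + 1) bb x)

/-- Two-point function `φ_p(x) = P_p(o → x)`. -/
noncomputable def phi (μ : Measure (Config d)) : Vert d → ℝ≥0∞ :=
  fun x => μ (connEvent 0 x)

/-- Space-time convolution of translation-invariant kernels. -/
noncomputable def conv (f g : Vert d → ℝ≥0∞) : Vert d → ℝ≥0∞ :=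
  fun x => ∑' v, f v * g (x - v)

/-- `m`-weighting: `f^{(m)}(x) = f(x) m^{τ_x}`. -/
noncomputable def wt (m : ℝ≥0∞) (f : Vert d → ℝ≥0∞) : Vert d → ℝ≥0∞ :=
  fun x => f x * m ^ x.2

/-- The weighted open triangle
`T_p^{(m)} = sup_x Σ_v (q*φ*φ)(v) · (m q * φ^{(m)})(x; v)`. -/
noncomputable def Tri (μ : Measure (Config d)) (q : Vert d → ℝ≥0∞) (m : ℝ≥0∞) : ℝ≥0∞ :=
  ⨆ x : Vert d, ∑' v : Vert d,
    conv (conv q (phi μ)) (phi μ) v * conv (wt m q) (wt m (phi μ)) (v - x)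

/-! ### Disjoint occurrence and the van den Berg–Kesten inequality -/

section BK

variable {β : Type*} [DecidableEq β]

/-- Probability, under independent `p`-percolation on the finite set `L`, that the set of
open elements belongs to `U`. -/
noncomputable def finProb (p : β → ℝ) (L : Finset β) (U : Set (Finset β)) : ℝ :=
  ∑ S ∈ L.powerset, (∏ b ∈ L, if b ∈ S then p b else 1 - p b) * U.indicator 1 S

/-- Disjoint occurrence of two set systems: `S` contains disjoint members of `U` and `V`. -/
def box (U V : Set (Finset β)) : Set (Finset β) :=
  {S | ∃ A B : Finset β, Disjoint A B ∧ A ⊆ S ∧ B ⊆ S ∧ A ∈ U ∧ B ∈ V}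

/-- The section of `U` on which `b` is open. -/
def sect (b : β) (U : Set (Finset β)) : Set (Finset β) := {S | insert b S ∈ U}

lemma isUpperSet_sect (b : β) {U : Set (Finset β)} (hU : IsUpperSet U) :
    IsUpperSet (sect b U) := fun _ _ h hS => hU (Finset.insert_subset_insert b h) hS

lemma subset_sect (b : β) {U : Set (Finset β)} (hU : IsUpperSet U) : U ⊆ sect b U :=
  fun _ hS => hU (Finset.subset_insert b _) hS

lemma finProb_insert (p : β → ℝ) (L : Finset β) (b : β) (hb : b ∉ L) (U : Set (Finset β)) :
    finProb p (insert b L) U = (1 - p b) * finProb p L U + p b * finProb p L (sect b U) := by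
  unfold finProb
  rw [Finset.sum_powerset_insert hb, Finset.mul_sum, Finset.mul_sum]
  congr 1
  · refine Finset.sum_congr rfl fun S hS => ?_
    have hbS : b ∉ S := fun h => hb (Finset.mem_powerset.1 hS h)
    rw [Finset.prod_insert hb, if_neg hbS, mul_assoc]
  · refine Finset.sum_congr rfl fun S hS => ?_
    rw [Finset.prod_insert hb, if_pos (Finset.mem_insert_self _ _), mul_assoc]
    have : (∏ x ∈ L, if x ∈ insert b S then p x else 1 - p x)
        = ∏ x ∈ L, if x ∈ S then p x else 1 - p x := by
      refine Finset.prod_congr rfl fun x hx => ?_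
      have : x ≠ b := fun h => hb (h ▸ hx)
      simp [Finset.mem_insert, this]
    rw [this]
    rfl

lemma finProb_le_lin (p : β → ℝ) (hp : ∀ b, 0 ≤ p b) (hp1 : ∀ b, p b ≤ 1) (L : Finset β)
    (U V W X : Set (Finset β))
    (h : ∀ S, U.indicator (1 : Finset β → ℝ) S + X.indicator 1 S
      ≤ V.indicator (1 : Finset β → ℝ) S + W.indicator 1 S) :
    finProb p L U + finProb p L X ≤ finProb p L V + finProb p L W := by
  unfold finProb
  rw [← Finset.sum_add_distrib, ← Finset.sum_add_distrib]
  refine Finset.sum_le_sum fun S _ => ?_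
  rw [← mul_add, ← mul_add]
  refine mul_le_mul_of_nonneg_left (h S) (Finset.prod_nonneg fun b _ => ?_)
  split_ifs
  · exact hp b
  · linarith [hp1 b]

lemma finProb_mono (p : β → ℝ) (hp : ∀ b, 0 ≤ p b) (hp1 : ∀ b, p b ≤ 1) (L : Finset β)
    {U V : Set (Finset β)} (h : U ⊆ V) : finProb p L U ≤ finProb p L V := by
  have := finProb_le_lin p hp hp1 L U V U U (fun S => by
    have : U.indicator (1 : Finset β → ℝ) S ≤ V.indicator 1 S :=
      Set.indicator_le_indicator_of_subset h (fun _ => zero_le_one) S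
    linarith)
  linarith

lemma box_mono {U U' V V' : Set (Finset β)} (h : U ⊆ U') (h' : V ⊆ V') :
    box U V ⊆ box U' V' := by
  rintro S ⟨A, B, h0, h1, h2, h3, h4⟩
  exact ⟨A, B, h0, h1, h2, h h3, h' h4⟩

/-- When `b` is open it can serve at most one of the two disjoint witnesses. -/
lemma sect_box_subset (b : β) {U V : Set (Finset β)} (hV : IsUpperSet V) :
    sect b (box U V) ⊆ box (sect b U) V ∪ box U (sect b V) := by
  rintro S ⟨A, B, hd, hA, hB, hAU, hBV⟩
  have key : ∀ A' : Finset β, A' ⊆ insert b S → A'.erase b ⊆ S := fun A' h => by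
    intro x hx
    have := h (Finset.mem_of_mem_erase hx)
    rcases Finset.mem_insert.1 this with h | h
    · exact absurd h (Finset.ne_of_mem_erase hx)
    · exact h
  by_cases hbA : b ∈ A
  · left
    have hbB : b ∉ B := fun h => (Finset.disjoint_left.1 hd) hbA h
    refine ⟨A.erase b, B, hd.mono_left (Finset.erase_subset _ _), key A hA, ?_, ?_, hBV⟩
    · rw [← Finset.erase_eq_of_notMem hbB]; exact key B hB
    · show insert b (A.erase b) ∈ U
      rwa [Finset.insert_erase hbA]
  · right
    refine ⟨A, B.erase b, hd.mono_right (Finset.erase_subset _ _), ?_, key B hB, hAU, ?_⟩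
    · rw [← Finset.erase_eq_of_notMem hbA]; exact key A hA
    · exact hV (Finset.subset_insert_iff.2 subset_rfl) hBV

/-- The BK inequality for increasing events depending on finitely many coordinates.
Conditioning on one coordinate reduces it to an inequality between the section
probabilities `a₀ ≤ a₁`, `b₀ ≤ b₁`, whose slack is `(a₁ - a₀) * (b₁ - b₀)` times
`p²` or `(1 - p)²`. -/
lemma finProb_box_le (p : β → ℝ) (hp : ∀ b, 0 ≤ p b) (hp1 : ∀ b, p b ≤ 1) (L : Finset β) :
    ∀ U V : Set (Finset β), IsUpperSet U → IsUpperSet V →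
      finProb p L (box U V) ≤ finProb p L U * finProb p L V := by
  induction L using Finset.induction_on with
  | empty =>
    intro U V _ _
    simp only [finProb, Finset.powerset_empty, Finset.sum_singleton, Finset.prod_empty, one_mul]
    by_cases h : (∅ : Finset β) ∈ box U V
    · obtain ⟨A, B, -, hA, hB, hAU, hBV⟩ := h
      rw [Finset.subset_empty] at hA hB
      subst hA; subst hB
      rw [Set.indicator_of_mem hAU, Set.indicator_of_mem hBV]
      simp only [Pi.one_apply, mul_one]
      exact Set.indicator_le_self' (fun _ _ => zero_le_one) _
    · rw [Set.indicator_of_notMem h]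
      exact mul_nonneg (Set.indicator_nonneg (fun _ _ => zero_le_one) _)
        (Set.indicator_nonneg (fun _ _ => zero_le_one) _)
  | insert b L hb ih =>
    intro U V hU hV
    have hU1 := isUpperSet_sect b hU
    have hV1 := isUpperSet_sect b hV
    rw [finProb_insert p L b hb, finProb_insert p L b hb, finProb_insert p L b hb]
    have e00 := ih U V hU hV
    have e10 := ih (sect b U) V hU1 hV
    have e01 := ih U (sect b V) hU hV1
    have e11 := ih _ _ hU1 hV1
    have a := finProb_mono p hp hp1 L (subset_sect b hU)
    have c := finProb_mono p hp hp1 L (subset_sect b hV)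
    have s1 : finProb p L (sect b (box U V)) ≤ finProb p L (box (sect b U) (sect b V)) := by
      refine finProb_mono p hp hp1 L ((sect_box_subset b hV).trans (Set.union_subset ?_ ?_))
      · exact box_mono subset_rfl (subset_sect b hV)
      · exact box_mono (subset_sect b hU) subset_rfl
    have s2 : finProb p L (sect b (box U V)) + finProb p L (box U V)
        ≤ finProb p L (box (sect b U) V) + finProb p L (box U (sect b V)) := by
      refine finProb_le_lin p hp hp1 L _ _ _ _ fun S => ?_
      by_cases h0 : S ∈ box U V
      · have h1 : S ∈ box (sect b U) V := box_mono (subset_sect b hU) subset_rfl h0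
        have h2 : S ∈ box U (sect b V) := box_mono subset_rfl (subset_sect b hV) h0
        rw [Set.indicator_of_mem h0, Set.indicator_of_mem h1, Set.indicator_of_mem h2]
        gcongr
        exact Set.indicator_le_self' (fun _ _ => zero_le_one) _
      · rw [Set.indicator_of_notMem h0, add_zero]
        by_cases h : S ∈ sect b (box U V)
        · rw [Set.indicator_of_mem h]
          rcases sect_box_subset b hV h with h1 | h1
          · rw [Set.indicator_of_mem h1]
            simp only [Pi.one_apply, le_add_iff_nonneg_right]
            exact Set.indicator_nonneg (fun _ _ => zero_le_one) _
          · rw [Set.indicator_of_mem h1]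
            simp only [Pi.one_apply, le_add_iff_nonneg_left]
            exact Set.indicator_nonneg (fun _ _ => zero_le_one) _
        · rw [Set.indicator_of_notMem h]
          exact add_nonneg (Set.indicator_nonneg (fun _ _ => zero_le_one) _)
            (Set.indicator_nonneg (fun _ _ => zero_le_one) _)
    generalize finProb p L U = a0 at *
    generalize finProb p L (sect b U) = a1 at *
    generalize finProb p L V = b0 at *
    generalize finProb p L (sect b V) = b1 at *
    have hpb := hp b
    have hpb1 := hp1 b
    generalize p b = t at *
    have hab : 0 ≤ (a1 - a0) * (b1 - b0) := mul_nonneg (by linarith) (by linarith)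
    rcases le_total t (1 / 2) with h | h
    · have n1 : 0 ≤ t * t * ((a1 - a0) * (b1 - b0)) := by positivity
      have n2 := mul_le_mul_of_nonneg_left e00 (show 0 ≤ 1 - 2 * t by linarith)
      have n3 := mul_le_mul_of_nonneg_left (s2.trans (add_le_add e10 e01)) hpb
      nlinarith
    · have n1 : 0 ≤ (1 - t) * (1 - t) * ((a1 - a0) * (b1 - b0)) := by positivity
      have n2 := mul_le_mul_of_nonneg_left (s1.trans e11) (show 0 ≤ 2 * t - 1 by linarith)
      have n3 := mul_le_mul_of_nonneg_left (s2.trans (add_le_add e10 e01))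
        (show 0 ≤ 1 - t by linarith)
      nlinarith

end BK

/-! ### Bond families under the percolation measure -/

/-- The event that some bond set of the family `F` is fully occupied. -/
def Osome (F : Set (Finset (Bond d))) : Set (Config d) := {ω | ∃ A ∈ F, ∀ b ∈ A, Occ ω b}

/-- Disjoint unions of a member of `F` and a member of `G`. -/
def dj (F G : Set (Finset (Bond d))) : Set (Finset (Bond d)) :=
  {C | ∃ A ∈ F, ∃ B ∈ G, Disjoint A B ∧ C = A ∪ B}

/-- The upper set generated by `F`. -/
def upf (F : Set (Finset (Bond d))) : Set (Finset (Bond d)) := {S | ∃ A ∈ F, A ⊆ S}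

/-- The event that the occupied bonds inside `L` form a member of `U`. -/
def cyl (L : Finset (Bond d)) (U : Set (Finset (Bond d))) : Set (Config d) :=
  {ω | L.filter (fun b => ω b = true) ∈ U}

/-- The measure of a cylinder event is a finite product-measure probability. -/
lemma measure_cyl {μ : Measure (Config d)} {q : Vert d → ℝ≥0∞}
    (hμ : IsBernoulliField μ (fun u v => q (v - u))) (L : Finset (Bond d))
    (U : Set (Finset (Bond d))) :
    μ (cyl L U) = ENNReal.ofReal (finProb (fun b => (q (b.2 - b.1)).toReal) L U) := by
  classical
  obtain ⟨-, hq1, -, hprod⟩ := hμ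
  have hq1' : ∀ b : Bond d, (q (b.2 - b.1)).toReal ≤ 1 := fun b =>
    ENNReal.toReal_le_of_le_ofReal zero_le_one (by simpa using hq1 b.1 b.2)
  have hU : cyl L U = ⋃ S ∈ L.powerset.filter (· ∈ U),
      {ω : Config d | ∀ b ∈ L, ω b = decide (b ∈ S)} := by
    ext ω
    simp only [cyl, Set.mem_ofPred_eq, Set.mem_iUnion, Finset.mem_filter, Finset.mem_powerset,
      exists_prop]
    constructor
    · intro h
      refine ⟨_, ⟨Finset.filter_subset _ _, h⟩, fun b hb => ?_⟩
      cases hω : ω b <;> simp [hω, hb]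
    · rintro ⟨S, ⟨hS, hSU⟩, h⟩
      have : L.filter (fun b => ω b = true) = S := by
        ext b
        rw [Finset.mem_filter]
        constructor
        · rintro ⟨hb, hb'⟩
          have := h b hb
          rw [hb'] at this
          exact of_decide_eq_true this.symm
        · intro hb
          exact ⟨hS hb, by rw [h b (hS hb)]; simpa using hb⟩
      rwa [this]
  rw [hU, measure_biUnion_finset]
  · unfold finProb
    rw [ENNReal.ofReal_sum_of_nonneg]
    · rw [Finset.sum_filter]
      refine Finset.sum_congr rfl fun S _ => ?_
      by_cases hS : S ∈ U
      · rw [if_pos hS, Set.indicator_of_mem hS, hprod, Pi.one_apply, mul_one,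
          ENNReal.ofReal_prod_of_nonneg]
        · refine Finset.prod_congr rfl fun b _ => ?_
          have hne : q (b.2 - b.1) ≠ ⊤ := ((hq1 b.1 b.2).trans_lt ENNReal.one_lt_top).ne
          by_cases hb : b ∈ S
          · simp [hb, ENNReal.ofReal_toReal hne]
          · simp [hb, ENNReal.ofReal_sub _ ENNReal.toReal_nonneg, ENNReal.ofReal_toReal hne]
        · intro b _
          split_ifs
          · exact ENNReal.toReal_nonneg
          · linarith [hq1' b]
      · rw [if_neg hS, Set.indicator_of_notMem hS, mul_zero, ENNReal.ofReal_zero]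
    · intro S _
      refine mul_nonneg (Finset.prod_nonneg fun b _ => ?_)
        (Set.indicator_nonneg (fun _ _ => zero_le_one) _)
      split_ifs
      · exact ENNReal.toReal_nonneg
      · linarith [hq1' b]
  · intro S hS S' hS' hne
    refine Set.disjoint_left.2 fun ω h h' => hne ?_
    simp only [Finset.coe_filter, Finset.mem_powerset, Set.mem_ofPred_eq] at hS hS' h h'
    ext b
    constructor
    · intro hb
      have h1 := h b (hS.1 hb)
      rw [h' b (hS.1 hb)] at h1
      simpa [hb] using h1
    · intro hb
      have h1 := h b (hS'.1 hb)
      rw [h' b (hS'.1 hb)] at h1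
      simpa [hb] using h1
  · intro S _
    have : {ω : Config d | ∀ b ∈ L, ω b = decide (b ∈ S)}
        = ⋂ b ∈ L, (fun ω : Config d => ω b) ⁻¹' {decide (b ∈ S)} := by
      ext ω; simp
    rw [this]
    exact Finset.measurableSet_biInter _ fun b _ =>
      measurable_pi_apply b (measurableSet_singleton _)

lemma Osome_eq_iUnion (F : Set (Finset (Bond d))) :
    Osome F = ⋃ L : Finset (Bond d), cyl L (upf F) := by
  ext ω
  simp only [Osome, cyl, upf, Set.mem_ofPred_eq, Set.mem_iUnion]
  constructor
  · rintro ⟨A, hA, h⟩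
    exact ⟨A, A, hA, fun b hb => Finset.mem_filter.2 ⟨hb, h b hb⟩⟩
  · rintro ⟨L, A, hA, h⟩
    exact ⟨A, hA, fun b hb => (Finset.mem_filter.1 (h hb)).2⟩

lemma measure_Osome (μ : Measure (Config d)) (F : Set (Finset (Bond d))) :
    μ (Osome F) = ⨆ L : Finset (Bond d), μ (cyl L (upf F)) := by
  rw [Osome_eq_iUnion]
  refine Directed.measure_iUnion fun L L' => ⟨L ∪ L', ?_, ?_⟩
  · rintro ω ⟨A, hA, h⟩
    exact ⟨A, hA, h.trans (Finset.filter_subset_filter _ Finset.subset_union_left)⟩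
  · rintro ω ⟨A, hA, h⟩
    exact ⟨A, hA, h.trans (Finset.filter_subset_filter _ Finset.subset_union_right)⟩

/-- The BK inequality for families of finite bond sets. -/
lemma bk {μ : Measure (Config d)} {q : Vert d → ℝ≥0∞}
    (hμ : IsBernoulliField μ (fun u v => q (v - u))) (F G : Set (Finset (Bond d))) :
    μ (Osome (dj F G)) ≤ μ (Osome F) * μ (Osome G) := by
  rw [measure_Osome]
  refine iSup_le fun L => ?_
  have hq1' : ∀ b : Bond d, (q (b.2 - b.1)).toReal ≤ 1 := fun b =>
    ENNReal.toReal_le_of_le_ofReal zero_le_one (by simpa using hμ.2.1 b.1 b.2)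
  have hup : ∀ H : Set (Finset (Bond d)), IsUpperSet (upf H) := fun H S S' h => by
    rintro ⟨A, hA, hAS⟩
    exact ⟨A, hA, hAS.trans h⟩
  have hle : ∀ H : Set (Finset (Bond d)), μ (cyl L (upf H)) ≤ μ (Osome H) := fun H => by
    rw [measure_Osome]
    exact le_iSup (fun L => μ (cyl L (upf H))) L
  calc μ (cyl L (upf (dj F G))) ≤ μ (cyl L (box (upf F) (upf G))) := by
        refine measure_mono ?_
        rintro ω ⟨C, ⟨A, hA, B, hB, hd, rfl⟩, h⟩
        exact ⟨A, B, hd, Finset.subset_union_left.trans h, Finset.subset_union_right.trans h,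
          ⟨A, hA, subset_rfl⟩, ⟨B, hB, subset_rfl⟩⟩
    _ ≤ μ (cyl L (upf F)) * μ (cyl L (upf G)) := by
        rw [measure_cyl hμ, measure_cyl hμ, measure_cyl hμ, ← ENNReal.ofReal_mul]
        · exact ENNReal.ofReal_le_ofReal
            (finProb_box_le _ (fun _ => ENNReal.toReal_nonneg) hq1' L _ _ (hup F) (hup G))
        · refine Finset.sum_nonneg fun S _ => mul_nonneg (Finset.prod_nonneg fun b _ => ?_)
            (Set.indicator_nonneg (fun _ _ => zero_le_one) _)
          split_ifs
          · exact ENNReal.toReal_nonneg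
          · linarith [hq1' b]
    _ ≤ _ := mul_le_mul' (hle F) (hle G)

lemma Osome_mono {F G : Set (Finset (Bond d))} (h : F ⊆ G) : Osome F ⊆ Osome G :=
  fun _ ⟨A, hA, ho⟩ => ⟨A, h hA, ho⟩

/-- The occupied bonds advance time by one unit. -/
def Good (ω : Config d) : Prop := ∀ b : Bond d, Occ ω b → b.2.2 = b.1.2 + 1

lemma measure_occ {μ : Measure (Config d)} {q : Vert d → ℝ≥0∞}
    (hμ : IsBernoulliField μ (fun u v => q (v - u))) (b : Bond d) :
    μ {ω | Occ ω b} = q (b.2 - b.1) := by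
  simpa [Occ] using hμ.2.2.2 {b} (fun _ => true)

lemma ae_good {μ : Measure (Config d)} {q : Vert d → ℝ≥0∞}
    (hμ : IsBernoulliField μ (fun u v => q (v - u))) : ∀ᵐ ω ∂μ, Good ω := by
  refine ae_all_iff.2 fun b => ?_
  by_cases hb : b.2.2 = b.1.2 + 1
  · exact Filter.Eventually.of_forall fun _ _ => hb
  · have : μ {ω | Occ ω b} = 0 := by
      rw [measure_occ hμ]
      exact hμ.2.2.1 _ _ hb
    filter_upwards [measure_eq_zero_iff_ae_notMem.1 this] with ω h h'
    exact absurd h' h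

/-- The finite bond sets containing a path from `u` to `x`. -/
def line (u x : Vert d) : Set (Finset (Bond d)) := {A | Conn (fun b => decide (b ∈ A)) u x}

/-- The finite bond sets containing a path of positive length from `u` to `x`. -/
def linep (u x : Vert d) : Set (Finset (Bond d)) := {A | A ∈ line u x ∧ u ≠ x}

/-- The two-point function with at least one step, `q * φ`. -/
noncomputable def fz (μ : Measure (Config d)) (q : Vert d → ℝ≥0∞) : Vert d → ℝ≥0∞ :=
  conv q (phi μ)

lemma Conn.mono {ω ω' : Config d} (h : ∀ b, Occ ω b → Occ ω' b) {u x : Vert d}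
    (hc : Conn ω u x) : Conn ω' u x := by
  induction hc with
  | refl v => exact Conn.refl v
  | step h1 _ ih => exact Conn.step (h _ h1) ih

lemma line_mono {u x : Vert d} {A B : Finset (Bond d)} (h : A ⊆ B) (hA : A ∈ line u x) :
    B ∈ line u x := by
  refine Conn.mono (fun b hb => ?_) hA
  have hb' : b ∈ A := of_decide_eq_true hb
  exact decide_eq_true (h hb')

lemma Osome_line (u x : Vert d) : Osome (line u x) = connEvent u x := by
  ext ω
  constructor
  · rintro ⟨A, hA, h⟩
    exact Conn.mono (fun b hb => h b (of_decide_eq_true hb)) hA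
  · intro h
    change Conn ω u x at h
    induction h with
    | refl v => exact ⟨∅, Conn.refl v, by simp⟩
    | @step a v w h1 _ ih =>
      obtain ⟨A, hA, h⟩ := ih
      refine ⟨insert (a, v) A, Conn.step (decide_eq_true (Finset.mem_insert_self _ _))
        (line_mono (Finset.subset_insert _ _) hA), fun b hb => ?_⟩
      rcases Finset.mem_insert.1 hb with rfl | hb
      · exact h1
      · exact h b hb

lemma measure_line {μ : Measure (Config d)}
    (htrans : ∀ u x : Vert d, μ (connEvent u x) = μ (connEvent 0 (x - u))) (u x : Vert d) :
    μ (Osome (line u x)) = phi μ (x - u) := by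
  rw [Osome_line, htrans]; rfl

lemma measure_single {μ : Measure (Config d)} {q : Vert d → ℝ≥0∞}
    (hμ : IsBernoulliField μ (fun u v => q (v - u))) (b : Bond d) :
    μ (Osome {{b}}) = q (b.2 - b.1) := by
  rw [← measure_occ hμ b]
  congr 1
  ext ω
  constructor
  · rintro ⟨A, rfl, h⟩
    exact h b (Finset.mem_singleton_self b)
  · exact fun h => ⟨{b}, rfl, fun c hc => by rwa [Finset.mem_singleton.1 hc]⟩

/-- In a good configuration a connection ends at a later or equal time, with equality only for
the trivial connection. -/
lemma Conn.time {ω : Config d} (hg : Good ω) {u x : Vert d} (h : Conn ω u x) :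
    u = x ∨ u.2 < x.2 := by
  induction h with
  | refl v => exact Or.inl rfl
  | step h1 _ ih =>
    have := hg _ h1
    simp only at this
    rcases ih with rfl | ih
    · right; omega
    · right; omega

lemma measure_linep {μ : Measure (Config d)} {q : Vert d → ℝ≥0∞}
    (hμ : IsBernoulliField μ (fun u v => q (v - u)))
    (htrans : ∀ u x : Vert d, μ (connEvent u x) = μ (connEvent 0 (x - u))) (u x : Vert d) :
    μ (Osome (linep u x)) ≤ fz μ q (x - u) := by
  have hsub : ∀ᵐ ω ∂μ, ω ∈ Osome (linep u x) →
      ω ∈ ⋃ v : Vert d, Osome (dj {{(u, v)}} (line v x)) := by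
    filter_upwards [ae_good hμ] with ω hg
    rintro ⟨A, ⟨hA, hne⟩, h⟩
    have hc : Conn ω u x := by
      have : ω ∈ Osome (line u x) := ⟨A, hA, h⟩
      rwa [Osome_line] at this
    cases hc with
    | refl => exact absurd rfl hne
    | @step _ v _ h1 h2 =>
      refine Set.mem_iUnion.2 ⟨v, ?_⟩
      have hcond : Conn (fun b => ω b && decide (b ≠ (u, v))) v x := by
        have ht := hg _ h1
        simp only at ht
        have key : ∀ {a : Vert d}, Conn ω a x → u.2 < a.2 →
            Conn (fun b => ω b && decide (b ≠ (u, v))) a x := by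
          intro a ha
          clear h2 hne hA h
          induction ha with
          | refl => exact fun _ => Conn.refl _
          | @step a c e g1 _ ih =>
            intro hlt
            have := hg _ g1
            simp only at this
            refine Conn.step ?_ (ih (by omega))
            have hne' : (a, c) ≠ (u, v) := fun he => by
              rw [show a = u from (Prod.ext_iff.1 he).1] at hlt
              exact lt_irrefl _ hlt
            have g1' : ω (a, c) = true := g1
            simp [Occ, g1', hne']
        exact key h2 (by omega)
      have hcond' : (fun b => ω b && decide (b ≠ (u, v))) ∈ Osome (line v x) := by
        rw [Osome_line]; exact hcond
      obtain ⟨B, hB, hB'⟩ := hcond'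
      refine ⟨{(u, v)} ∪ B, ⟨{(u, v)}, rfl, B, hB, ?_, rfl⟩, fun b hb => ?_⟩
      · rw [Finset.disjoint_singleton_left]
        intro hmem
        have := hB' _ hmem
        simp [Occ] at this
      · rcases Finset.mem_union.1 hb with hb | hb
        · rw [Finset.mem_singleton.1 hb]; exact h1
        · have := hB' b hb
          simp only [Occ, Bool.and_eq_true] at this
          exact this.1
  calc μ (Osome (linep u x)) ≤ μ (⋃ v : Vert d, Osome (dj {{(u, v)}} (line v x))) :=
        measure_mono_ae hsub
    _ ≤ ∑' v : Vert d, μ (Osome (dj {{(u, v)}} (line v x))) := measure_iUnion_le _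
    _ ≤ ∑' v : Vert d, q (v - u) * phi μ (x - v) := by
        refine ENNReal.tsum_le_tsum fun v => (bk hμ _ _).trans ?_
        rw [measure_single hμ, measure_line htrans]
    _ = fz μ q (x - u) := by
        unfold fz conv
        rw [← (Equiv.subRight u).tsum_eq (fun v => q v * phi μ (x - u - v))]
        refine tsum_congr fun v => ?_
        simp only [Equiv.subRight_apply]
        congr 2
        abel

/-! ### Paths indexed by time, and a Menger-type lemma -/

/-- `γ` restricted to the times `s ≤ i ≤ t` is an occupied path; `γ i` has time coordinate `i`. -/
def IsPath (ω : Config d) (γ : ℤ → Vert d) (s t : ℤ) : Prop :=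
  (∀ i, s ≤ i → i ≤ t → (γ i).2 = i) ∧ ∀ i, s ≤ i → i < t → Occ ω (γ i, γ (i + 1))

/-- The path that follows `δ` up to time `s` and `γ` afterwards. -/
def splice (δ γ : ℤ → Vert d) (s : ℤ) : ℤ → Vert d := fun i => if i ≤ s then δ i else γ i

lemma splice_le {δ γ : ℤ → Vert d} {s i : ℤ} (h : i ≤ s) : splice δ γ s i = δ i := if_pos h

lemma splice_ge {δ γ : ℤ → Vert d} {s i : ℤ} (hs : γ s = δ s) (h : s ≤ i) :
    splice δ γ s i = γ i := by
  rcases h.lt_or_eq with h | rfl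
  · exact if_neg (by omega)
  · rw [splice_le le_rfl, hs]

lemma path_of_conn {ω : Config d} (hg : Good ω) {u x : Vert d} (h : Conn ω u x) :
    u.2 ≤ x.2 ∧ ∃ γ : ℤ → Vert d, γ u.2 = u ∧ γ x.2 = x ∧ IsPath ω γ u.2 x.2 := by
  induction h with
  | refl v =>
    refine ⟨le_rfl, fun _ => v, rfl, rfl, fun i h h' => ?_, fun i h h' => ?_⟩ <;> simp only <;> omega
  | @step a c e h1 _ ih =>
    obtain ⟨hle, γ, g1, g2, g3, g4⟩ := ih
    have ht := hg _ h1
    simp only at ht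
    refine ⟨by omega, fun i => if i ≤ a.2 then a else γ i, ?_, ?_, fun i h h' => ?_,
      fun i h h' => ?_⟩
    · simp
    · simp only
      rw [if_neg (by omega), g2]
    · simp only
      split_ifs
      · omega
      · exact g3 i (by omega) h'
    · simp only
      split_ifs
      · omega
      · have : i + 1 = c.2 := by omega
        rw [this, g1]; exact h1
      · omega
      · exact g4 i (by omega) h'

lemma Conn.trans {ω : Config d} {u v x : Vert d} (h : Conn ω u v) (hv : Conn ω v x) :
    Conn ω u x := by
  induction h with
  | refl => exact hv
  | step h1 _ ih => exact Conn.step h1 (ih hv)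

/-- The bonds traversed by `γ` between times `s` and `t`. -/
noncomputable def bonds (γ : ℤ → Vert d) (s t : ℤ) : Finset (Bond d) :=
  (Finset.Ico s t).image fun i => (γ i, γ (i + 1))

lemma mem_bonds {γ : ℤ → Vert d} {s t : ℤ} {e : Bond d} :
    e ∈ bonds γ s t ↔ ∃ i, s ≤ i ∧ i < t ∧ (γ i, γ (i + 1)) = e := by
  simp [bonds, and_assoc]

lemma conn_of_steps {ω : Config d} {γ : ℤ → Vert d} {s t : ℤ} (hst : s ≤ t)
    (h : ∀ i, s ≤ i → i < t → Occ ω (γ i, γ (i + 1))) : Conn ω (γ s) (γ t) := by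
  induction t, hst using Int.leInduction with
  | base => exact Conn.refl _
  | succ t hst ih =>
    exact (ih fun i h1 h2 => h i h1 (by omega)).trans
      (Conn.step (h t hst (by omega)) (Conn.refl _))

lemma bonds_mem_line {γ : ℤ → Vert d} {s t : ℤ} (hst : s ≤ t) :
    bonds γ s t ∈ line (γ s) (γ t) :=
  conn_of_steps hst fun i h1 h2 => decide_eq_true (mem_bonds.2 ⟨i, h1, h2, rfl⟩)

lemma occ_flip {ω : Config d} {b e : Bond d} :
    Occ (flipBond ω b false) e ↔ Occ ω e ∧ e ≠ b := by
  unfold Occ flipBond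
  by_cases h : e = b <;> simp [h]

lemma Good.flip {ω : Config d} (hg : Good ω) (b : Bond d) : Good (flipBond ω b false) :=
  fun e he => hg e (occ_flip.1 he).1

lemma connAvoid_iff {ω : Config d} {b : Bond d} {u x : Vert d} :
    ConnAvoid ω b u x ↔ Conn (flipBond ω b false) u x := by
  constructor
  · intro h
    induction h with
    | refl => exact Conn.refl _
    | step h1 h2 _ ih => exact Conn.step (occ_flip.2 ⟨h2, h1⟩) ih
  · intro h
    induction h with
    | refl => exact ConnAvoid.refl _
    | step h1 _ ih => exact ConnAvoid.step (occ_flip.1 h1).2 (occ_flip.1 h1).1 ih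

lemma IsPath.splice {ω : Config d} {δ γ : ℤ → Vert d} {r s t : ℤ}
    (hδ : IsPath ω δ r s) (hγ : IsPath ω γ s t) (hs : γ s = δ s) :
    IsPath ω (splice δ γ s) r t := by
  refine ⟨fun i h1 h2 => ?_, fun i h1 h2 => ?_⟩
  · rcases le_total i s with h | h
    · rw [splice_le h]; exact hδ.1 i h1 h
    · rw [splice_ge hs h]; exact hγ.1 i h h2
  · rcases lt_or_ge i s with h | h
    · rw [splice_le h.le, splice_le (by omega)]; exact hδ.2 i h1 h
    · rw [splice_ge hs h, splice_ge hs (by omega)]; exact hγ.2 i h h2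

lemma IsPath.sub {ω : Config d} {γ : ℤ → Vert d} {r s t u : ℤ} (h : IsPath ω γ r u)
    (h1 : r ≤ s) (h2 : t ≤ u) : IsPath ω γ s t :=
  ⟨fun i a b => h.1 i (h1.trans a) (b.trans h2), fun i a b => h.2 i (h1.trans a) (b.trans_le h2)⟩

/-- Replacing `δ` by the detour `γ` after time `s` keeps it disjoint from `ρ` and pushes the first
common bond past time `t`, provided that `γ` misses `ρ` at times in `(s, t]` and does not use the
bond of `ρ` at time `t`. -/
lemma splice_disj {δ ρ γ : ℤ → Vert d} {r s t : ℤ} (hs : γ s = δ s)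
    (hd : ∀ i, r ≤ i → i < t → (δ i, δ (i + 1)) ≠ (ρ i, ρ (i + 1))) (hst : s ≤ t)
    (hγ : ∀ i, s < i → i ≤ t → γ i ≠ ρ i)
    (ht : (γ t, γ (t + 1)) ≠ (ρ t, ρ (t + 1))) :
    ∀ i, r ≤ i → i < t + 1 →
      (splice δ γ s i, splice δ γ s (i + 1)) ≠ (ρ i, ρ (i + 1)) := by
  intro i h1 h2
  rcases lt_or_ge i s with h | h
  · rw [splice_le h.le, splice_le (by omega)]
    exact hd i h1 (by omega)
  · rw [splice_ge hs h, splice_ge hs (by omega)]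
    rcases (Int.lt_add_one_iff.1 h2).lt_or_eq with h3 | rfl
    · exact fun he => hγ (i + 1) (by omega) (by omega) (Prod.ext_iff.1 he).2
    · exact ht

/-- On `E(b, x; C̃^b(y))` there are bond-disjoint occupied paths `y → x` (avoiding `b`) and
`b̄ → x`. Two such paths sharing a first bond `e` can be rerouted: the bottom of `e` lies in
`C̃^b(y)`, so `e` is not pivotal and there is a path from `b̄` avoiding `e`, which is followed from
the last time it meets one of the two paths. -/
lemma menger {ω : Config d} (hg : Good ω) {b : Bond d} {x y : Vert d} (hy : y.2 ≤ b.1.2)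
    (hE : ω ∈ Eevent b x y) :
    ∃ α β : ℤ → Vert d, α y.2 = y ∧ α x.2 = x ∧ β b.2.2 = b.2 ∧ β x.2 = x ∧
      IsPath (flipBond ω b false) α y.2 x.2 ∧ IsPath ω β b.2.2 x.2 ∧
      ∀ i, b.2.2 ≤ i → i < x.2 → (α i, α (i + 1)) ≠ (β i, β (i + 1)) := by
  obtain ⟨hb, hbx, hyx, hpiv⟩ := hE
  have hbt := hg b hb
  obtain ⟨hle, β0, b1, b2, b3⟩ := path_of_conn hg hbx
  obtain ⟨-, α0, a1, a2, a3⟩ := path_of_conn (hg.flip b) (connAvoid_iff.1 hyx)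
  -- bonds common to both paths are removed one at a time, in order of time
  suffices H : ∀ t, b.2.2 ≤ t → t ≤ x.2 → ∃ α β : ℤ → Vert d, α y.2 = y ∧ α x.2 = x ∧
      β b.2.2 = b.2 ∧ β x.2 = x ∧ IsPath (flipBond ω b false) α y.2 x.2 ∧ IsPath ω β b.2.2 x.2 ∧
      ∀ i, b.2.2 ≤ i → i < t → (α i, α (i + 1)) ≠ (β i, β (i + 1)) from H x.2 hle le_rfl
  intro t hbt'
  induction t, hbt' using Int.leInduction with
  | base => exact fun _ => ⟨α0, β0, a1, a2, b1, b2, a3, b3, fun i h h' => by omega⟩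
  | succ t hbt' ih =>
    intro htx
    obtain ⟨α, β, a1, a2, b1, b2, a3, b3, hd⟩ := ih (by omega)
    by_cases he : (α t, α (t + 1)) = (β t, β (t + 1))
    swap
    · refine ⟨α, β, a1, a2, b1, b2, a3, b3, fun i h1 h2 => ?_⟩
      rcases (Int.lt_add_one_iff.1 h2).lt_or_eq with h3 | rfl
      · exact hd i h1 h3
      · exact he
    have hα : α t ∈ tilC ω b y := by
      refine connAvoid_iff.2 ?_
      have := conn_of_steps (ω := flipBond ω b false) (γ := α) (s := y.2) (t := t) (by omega)
        fun i h1 h2 => a3.2 i h1 (by omega)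
      rwa [a1] at this
    have hnp : Conn (flipBond ω (β t, β (t + 1)) false) b.2 x := by
      by_contra hn
      refine hpiv (β t, β (t + 1)) ⟨hbx.mono fun e h => ?_, hn⟩ ?_
      · unfold Occ flipBond
        split_ifs
        · rfl
        · exact h
      · rwa [← he]
    obtain ⟨-, γ, c1, c2, c3⟩ := path_of_conn (hg.flip _) hnp
    have c3' : IsPath ω γ b.2.2 x.2 := ⟨c3.1, fun i h1 h2 => (occ_flip.1 (c3.2 i h1 h2)).1⟩
    have hγt : (γ t, γ (t + 1)) ≠ (β t, β (t + 1)) := (occ_flip.1 (c3.2 t hbt' (by omega))).2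
    obtain ⟨s, ⟨hs1, hs2, hs3⟩, hmax⟩ := Int.exists_greatest_of_bdd
      (P := fun s => b.2.2 ≤ s ∧ s ≤ t ∧ (γ s = α s ∨ γ s = β s)) ⟨t, fun z hz => hz.2.1⟩
      ⟨b.2.2, le_rfl, hbt', Or.inr (by rw [c1, b1])⟩
    rcases hs3 with hs3 | hs3
    · refine ⟨splice α γ s, β, ?_, ?_, b1, b2, ?_, b3, ?_⟩
      · rw [splice_le (by omega), a1]
      · rw [splice_ge hs3 (by omega), c2]
      · refine (a3.sub le_rfl (by omega)).splice ⟨fun i h1 h2 => c3.1 i (by omega) h2,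
          fun i h1 h2 => occ_flip.2 ⟨c3'.2 i (by omega) h2, fun h => ?_⟩⟩ hs3
        have h4 : b.2.2 = i + 1 := by
          rw [← h]
          exact c3.1 (i + 1) (by omega) (by omega)
        omega
      · exact splice_disj hs3 hd hs2
          (fun i h1 h2 h3 => absurd (hmax i ⟨by omega, h2, Or.inr h3⟩) (by omega)) hγt
    · refine ⟨α, splice β γ s, a1, a2, ?_, ?_, a3, ?_, ?_⟩
      · rw [splice_le (by omega), b1]
      · rw [splice_ge hs3 (by omega), c2]
      · exact (b3.sub le_rfl (by omega)).splice (c3'.sub (by omega) le_rfl) hs3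
      · have := splice_disj (ρ := α) hs3 (fun i h1 h2 => (hd i h1 h2).symm) hs2
          (fun i h1 h2 h3 => absurd (hmax i ⟨by omega, h2, Or.inl h3⟩) (by omega)) (he ▸ hγt)
        exact fun i h1 h2 => (this i h1 h2).symm

/-! ### Ladder diagrams -/

/-- The bond sets of the ladder diagrams hanging from `v` and ending at `x`, with pivotal bonds
`bb 0, …, bb N`. In each stage the vertex `v'` at which the next ladder is attached lies on one of
two bond-disjoint paths to `w' = (bb 1).1`: either on the one coming from `v`, or (strictly before
`w'`) on the one coming from the top of `bb 0`. -/
def DF : (N : ℕ) → (Fin (N + 1) → Bond d) → Vert d → Vert d → Set (Finset (Bond d))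
  | 0, bb, v, x => dj (linep v x) (dj {{bb 0}} (line (bb 0).2 x))
  | N + 1, bb, v, x => ⋃ v' : Vert d,
      dj (linep v v') (dj (line v' (bb 1).1) (dj {{bb 0}} (dj (line (bb 0).2 (bb 1).1)
        (DF N (Fin.tail bb) v' x)))) ∪
      {C | v' ≠ (bb 1).1 ∧ C ∈ dj (linep v (bb 1).1) (dj {{bb 0}} (dj (line (bb 0).2 v')
        (dj (line v' (bb 1).1) (DF N (Fin.tail bb) v' x))))}

/-- The successive conditions of the lace event, with `y` in place of the origin as the starting
point of the first cluster. -/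
def Chain (ω : Config d) : (N : ℕ) → (Fin (N + 1) → Bond d) → Vert d → Vert d → Prop
  | 0, bb, y, x => ω ∈ Eevent (bb 0) x y
  | N + 1, bb, y, x => ω ∈ Eevent (bb 0) (bb 1).1 y ∧ Chain ω N (Fin.tail bb) (bb 0).2 x

lemma mem_dj {F G : Set (Finset (Bond d))} {A B : Finset (Bond d)} (hA : A ∈ F) (hB : B ∈ G)
    (h : ∀ e ∈ A, e ∉ B) : A ∪ B ∈ dj F G :=
  ⟨A, hA, B, hB, Finset.disjoint_left.2 h, rfl⟩

lemma bonds_time {ω : Config d} {γ : ℤ → Vert d} {s t : ℤ} (h : IsPath ω γ s t) {e : Bond d}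
    (he : e ∈ bonds γ s t) :
    s ≤ e.1.2 ∧ e.1.2 < t ∧ e = (γ e.1.2, γ (e.1.2 + 1)) ∧ Occ ω e := by
  obtain ⟨i, h1, h2, rfl⟩ := mem_bonds.1 he
  have := h.1 i h1 h2.le
  refine ⟨?_, ?_, ?_, h.2 i h1 h2⟩ <;> simp only [this]
  · exact h1
  · exact h2

lemma linep_of_path {ω : Config d} {γ : ℤ → Vert d} {s t : ℤ} (h : IsPath ω γ s t) (hst : s < t) :
    bonds γ s t ∈ linep (γ s) (γ t) := by
  refine ⟨bonds_mem_line hst.le, fun he => ?_⟩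
  have h1 := h.1 s le_rfl hst.le
  have h2 := h.1 t hst.le le_rfl
  rw [he] at h1
  omega

lemma IsPath.unflip {ω : Config d} {b : Bond d} {γ : ℤ → Vert d} {s t : ℤ}
    (h : IsPath (flipBond ω b false) γ s t) : IsPath ω γ s t :=
  ⟨h.1, fun i h1 h2 => (occ_flip.1 (h.2 i h1 h2)).1⟩

/-- On the chain of events there is a path `α` leaving `y` such that a ladder diagram is occupied
from every vertex of `α` up to the bottom of the first pivotal bond. Apart from the later part of
`α`, the diagram uses only bonds at later times, so whatever precedes it remains available. -/
lemma chain_DF {ω : Config d} (hg : Good ω) (N : ℕ) :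
    ∀ (bb : Fin (N + 1) → Bond d) (y x : Vert d), y.2 ≤ (bb 0).1.2 → Chain ω N bb y x →
      ∃ α : ℤ → Vert d, α y.2 = y ∧ ∀ t, y.2 ≤ t → t ≤ (bb 0).1.2 →
        (α t).2 = t ∧ ∃ A ∈ DF N bb (α t) x, ∀ e ∈ A, Occ ω e ∧
          ((t ≤ e.1.2 ∧ e = (α e.1.2, α (e.1.2 + 1))) ∨ (bb 0).1.2 ≤ e.1.2) := by
  induction N with
  | zero =>
    intro bb y x hy hE
    change ω ∈ Eevent (bb 0) x y at hE
    obtain ⟨α, β, a1, a2, b1, b2, a3, b3, hd⟩ := menger hg hy hE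
    have hocc : Occ ω (bb 0) := hE.1
    have hbt := hg _ hocc
    have hle := (path_of_conn hg hE.2.1).1
    refine ⟨α, a1, fun t h1 h2 => ⟨a3.1 t h1 (by omega), ?_⟩⟩
    have hα : ∀ e ∈ bonds α t x.2, _ := fun e he => bonds_time (a3.sub h1 le_rfl) he
    have hβ : ∀ e ∈ bonds β (bb 0).2.2 x.2, _ := fun e he => bonds_time b3 he
    refine ⟨bonds α t x.2 ∪ ({bb 0} ∪ bonds β (bb 0).2.2 x.2),
      mem_dj ?_ (mem_dj (Set.mem_singleton _) ?_ ?_) ?_, ?_⟩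
    · have := linep_of_path (a3.sub h1 le_rfl) (show t < x.2 by omega)
      rwa [a2] at this
    · have := bonds_mem_line (γ := β) hle
      rwa [b1, b2] at this
    · intro e he he'
      rw [Finset.mem_singleton.1 he] at he'
      have := (hβ _ he').1
      omega
    · intro e he he'
      obtain ⟨-, g2, g3, g4⟩ := hα e he
      rcases Finset.mem_union.1 he' with h | h
      · exact (occ_flip.1 g4).2 (Finset.mem_singleton.1 h)
      · obtain ⟨k1, k2, k3, k4⟩ := hβ e h
        exact hd _ k1 k2 (g3.symm.trans k3)
    · intro e he
      rcases Finset.mem_union.1 he with h | h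
      · obtain ⟨g1, g2, g3, g4⟩ := hα e h
        exact ⟨(occ_flip.1 g4).1, Or.inl ⟨g1, g3⟩⟩
      rcases Finset.mem_union.1 h with h | h
      · rw [Finset.mem_singleton.1 h]
        exact ⟨hocc, Or.inr le_rfl⟩
      · obtain ⟨g1, g2, g3, g4⟩ := hβ e h
        exact ⟨g4, Or.inr (by omega)⟩
  | succ N ih =>
    intro bb y x hy hE
    obtain ⟨hE, hC⟩ := hE
    obtain ⟨α, β, a1, a2, b1, b2, a3, b3, hd⟩ := menger hg hy hE
    have hocc : Occ ω (bb 0) := hE.1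
    have hbt := hg _ hocc
    have hle := (path_of_conn hg hE.2.1).1
    have htail : Fin.tail bb 0 = bb 1 := rfl
    obtain ⟨δ, d1, hδ⟩ := ih (Fin.tail bb) (bb 0).2 x (by rw [htail]; exact hle) hC
    rw [htail] at hδ
    set w := (bb 1).1 with hw
    -- `δ s` is the last vertex where the tail diagram's path `δ` meets `α` or `β`; the diagram is
    -- attached there, on the side of `α` or of `β`
    obtain ⟨s, ⟨hs1, hs2, hs3⟩, hmax⟩ := Int.exists_greatest_of_bdd
      (P := fun s => (bb 0).2.2 ≤ s ∧ s ≤ w.2 ∧ (δ s = α s ∨ δ s = β s))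
      ⟨w.2, fun z hz => hz.2.1⟩ ⟨(bb 0).2.2, le_rfl, hle, Or.inr (by rw [d1, b1])⟩
    obtain ⟨hδs, A, hA, hA'⟩ := hδ s hs1 hs2
    refine ⟨α, a1, fun t h1 h2 => ⟨a3.1 t h1 (by omega), ?_⟩⟩
    -- the tail diagram shares no bond with the two current paths
    have hAα : ∀ r u, u ≤ w.2 → y.2 ≤ r → ∀ e ∈ bonds α r u, e ∉ A := by
      intro r u hu hr e he heA
      obtain ⟨g1, g2, g3, g4⟩ := bonds_time (a3.sub hr hu) he
      rcases (hA' e heA).2 with ⟨k1, k2⟩ | k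
      · have := hmax (e.1.2 + 1) ⟨by omega, by omega,
          Or.inl (Prod.ext_iff.1 (k2.symm.trans g3)).2⟩
        omega
      · omega
    have hAβ : ∀ r u, u ≤ w.2 → (bb 0).2.2 ≤ r → ∀ e ∈ bonds β r u, e ∉ A := by
      intro r u hu hr e he heA
      obtain ⟨g1, g2, g3, g4⟩ := bonds_time (b3.sub hr hu) he
      rcases (hA' e heA).2 with ⟨k1, k2⟩ | k
      · have := hmax (e.1.2 + 1) ⟨by omega, by omega,
          Or.inr (Prod.ext_iff.1 (k2.symm.trans g3)).2⟩
        omega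
      · omega
    have hbA : bb 0 ∉ A := fun h => by
      rcases (hA' _ h).2 with ⟨k1, -⟩ | k <;> omega
    have hαβ : ∀ r u r' u', u ≤ w.2 → y.2 ≤ r → u' ≤ w.2 → (bb 0).2.2 ≤ r' →
        ∀ e ∈ bonds α r u, e ∉ bonds β r' u' := by
      intro r u r' u' hu hr hu' hr' e he he'
      obtain ⟨g1, g2, g3, g4⟩ := bonds_time (a3.sub hr hu) he
      obtain ⟨k1, k2, k3, k4⟩ := bonds_time (b3.sub hr' hu') he'
      exact hd _ (by omega) (by omega) (g3.symm.trans k3)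
    have hαb : ∀ r u, u ≤ w.2 → y.2 ≤ r → bb 0 ∉ bonds α r u := fun r u hu hr he =>
      (occ_flip.1 (bonds_time (a3.sub hr hu) he).2.2.2).2 rfl
    have hβb : ∀ r u, u ≤ w.2 → (bb 0).2.2 ≤ r → bb 0 ∉ bonds β r u := fun r u hu hr he => by
      have := (bonds_time (b3.sub hr hu) he).1
      omega
    have hOα : ∀ r u, u ≤ w.2 → y.2 ≤ r → t ≤ r → ∀ e ∈ bonds α r u, Occ ω e ∧
        ((t ≤ e.1.2 ∧ e = (α e.1.2, α (e.1.2 + 1))) ∨ (bb 0).1.2 ≤ e.1.2) :=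
      fun r u hu hr ht e he => by
        obtain ⟨g1, g2, g3, g4⟩ := bonds_time (a3.sub hr hu) he
        exact ⟨(occ_flip.1 g4).1, Or.inl ⟨ht.trans g1, g3⟩⟩
    have hOβ : ∀ r u, u ≤ w.2 → (bb 0).2.2 ≤ r → ∀ e ∈ bonds β r u, Occ ω e ∧
        ((t ≤ e.1.2 ∧ e = (α e.1.2, α (e.1.2 + 1))) ∨ (bb 0).1.2 ≤ e.1.2) :=
      fun r u hu hr e he => by
        obtain ⟨g1, g2, g3, g4⟩ := bonds_time (b3.sub hr hu) he
        exact ⟨g4, Or.inr (by omega)⟩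
    have hOA : ∀ e ∈ A, Occ ω e ∧
        ((t ≤ e.1.2 ∧ e = (α e.1.2, α (e.1.2 + 1))) ∨ (bb 0).1.2 ≤ e.1.2) := fun e he => by
      obtain ⟨g1, g2⟩ := hA' e he
      exact ⟨g1, Or.inr (by rcases g2 with ⟨k, -⟩ | k <;> omega)⟩
    have hOb : Occ ω (bb 0) ∧ ((t ≤ (bb 0).1.2 ∧ bb 0 = (α (bb 0).1.2, α ((bb 0).1.2 + 1))) ∨
        (bb 0).1.2 ≤ (bb 0).1.2) := ⟨hocc, Or.inr le_rfl⟩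
    by_cases hsα : δ s = α s
    · refine ⟨bonds α t s ∪ (bonds α s w.2 ∪ ({bb 0} ∪ (bonds β (bb 0).2.2 w.2 ∪ A))),
        Set.mem_iUnion.2 ⟨δ s, Or.inl (mem_dj ?_ (mem_dj ?_ (mem_dj (Set.mem_singleton _)
          (mem_dj ?_ hA ?_) ?_) ?_) ?_)⟩, ?_⟩
      · rw [hsα]
        exact linep_of_path (a3.sub h1 hs2) (by omega)
      · have := bonds_mem_line (γ := α) hs2
        rwa [a2, ← hsα] at this
      · have := bonds_mem_line (γ := β) hle
        rwa [b1, b2] at this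
      · exact hAβ _ _ le_rfl le_rfl
      · intro e he
        rw [Finset.mem_singleton.1 he, Finset.mem_union, not_or]
        exact ⟨hβb _ _ le_rfl le_rfl, hbA⟩
      · intro e he
        simp only [Finset.mem_union, not_or, Finset.mem_singleton]
        exact ⟨fun h => hαb s w.2 le_rfl (by omega) (h ▸ he),
          hαβ s w.2 _ _ le_rfl (by omega) le_rfl le_rfl e he, hAα s w.2 le_rfl (by omega) e he⟩
      · intro e he
        simp only [Finset.mem_union, not_or, Finset.mem_singleton]
        refine ⟨fun h => ?_, fun h => hαb t s hs2 h1 (h ▸ he),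
          hαβ t s _ _ hs2 h1 le_rfl le_rfl e he, hAα t s hs2 h1 e he⟩
        have k1 := bonds_time (a3.sub h1 hs2) he
        have k2 := bonds_time (a3.sub (s := s) (by omega) le_rfl) h
        omega
      · intro e he
        simp only [Finset.mem_union, Finset.mem_singleton] at he
        rcases he with h | h | rfl | h | h
        · exact hOα t s hs2 h1 le_rfl e h
        · exact hOα s w.2 le_rfl (by omega) (by omega) e h
        · exact hOb
        · exact hOβ _ _ le_rfl le_rfl e h
        · exact hOA e h
    · have hsβ : δ s = β s := hs3.resolve_left hsα
      have hne : δ s ≠ w := fun h => hsα (by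
        have : s = w.2 := by rw [← hδs, h]
        rw [h, this, a2])
      refine ⟨bonds α t w.2 ∪ ({bb 0} ∪ (bonds β (bb 0).2.2 s ∪ (bonds β s w.2 ∪ A))),
        Set.mem_iUnion.2 ⟨δ s, Or.inr ⟨hne, mem_dj ?_ (mem_dj (Set.mem_singleton _)
          (mem_dj ?_ (mem_dj ?_ hA ?_) ?_) ?_) ?_⟩⟩, ?_⟩
      · have := linep_of_path (a3.sub h1 le_rfl) (show t < w.2 by omega)
        rwa [a2] at this
      · have := bonds_mem_line (γ := β) hs1
        rwa [b1, ← hsβ] at this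
      · have := bonds_mem_line (γ := β) hs2
        rwa [b2, ← hsβ] at this
      · exact hAβ _ _ le_rfl hs1
      · intro e he
        rw [Finset.mem_union, not_or]
        refine ⟨fun h => ?_, hAβ _ _ hs2 le_rfl e he⟩
        have k1 := bonds_time (b3.sub le_rfl hs2) he
        have k2 := bonds_time (b3.sub hs1 le_rfl) h
        omega
      · intro e he
        rw [Finset.mem_singleton.1 he]
        simp only [Finset.mem_union, not_or]
        exact ⟨hβb _ _ hs2 le_rfl, hβb _ _ le_rfl hs1, hbA⟩
      · intro e he
        simp only [Finset.mem_union, not_or, Finset.mem_singleton]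
        exact ⟨fun h => hαb t w.2 le_rfl h1 (h ▸ he), hαβ t w.2 _ _ le_rfl h1 hs2 le_rfl e he,
          hαβ t w.2 _ _ le_rfl h1 le_rfl hs1 e he, hAα t w.2 le_rfl h1 e he⟩
      · intro e he
        simp only [Finset.mem_union, Finset.mem_singleton] at he
        rcases he with h | rfl | h | h | h
        · exact hOα t w.2 le_rfl h1 le_rfl e h
        · exact hOb
        · exact hOβ _ _ hs2 le_rfl e h
        · exact hOβ _ _ le_rfl hs1 e h
        · exact hOA e h

/-- A doubly connected pair is joined by two bond-disjoint paths. -/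
lemma double_paths {ω : Config d} (hg : Good ω) {u w : Vert d} (h : ω ∈ DoubleConn u w) :
    u.2 ≤ w.2 ∧ ∃ α β : ℤ → Vert d, α u.2 = u ∧ α w.2 = w ∧ β u.2 = u ∧ β w.2 = w ∧
      IsPath ω α u.2 w.2 ∧ IsPath ω β u.2 w.2 ∧
      ∀ i, u.2 ≤ i → i < w.2 → (α i, α (i + 1)) ≠ (β i, β (i + 1)) := by
  classical
  obtain ⟨B1, B2, hd, h1, h2⟩ := h
  have key : ∀ B : Set (Bond d), OccursOn (connEvent u w) B ω →
      Conn (fun b => ω b && decide (b ∈ B)) u w := fun B hB =>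
    hB _ fun b hb => by simp [hb]
  have hg' : ∀ B : Set (Bond d), Good (fun b => ω b && decide (b ∈ B)) := fun B b hb => by
    refine hg b ?_
    simp only [Occ, Bool.and_eq_true] at hb
    exact hb.1
  obtain ⟨hle, α, a1, a2, a3, a4⟩ := path_of_conn (hg' B1) (key B1 h1)
  obtain ⟨-, β, b1, b2, b3, b4⟩ := path_of_conn (hg' B2) (key B2 h2)
  simp only [Occ, Bool.and_eq_true, decide_eq_true_eq] at a4 b4
  refine ⟨hle, α, β, a1, a2, b1, b2, ⟨a3, fun i h h' => (a4 i h h').1⟩,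
    ⟨b3, fun i h h' => (b4 i h h').1⟩, fun i h h' he => ?_⟩
  have k1 := (a4 i h h').2
  have k2 := (b4 i h h').2
  rw [he] at k1
  exact Set.disjoint_left.1 hd k1 k2

/-- On the lace event the full ladder diagram is occupied: two disjoint paths from the origin to
the bottom `w` of the first pivotal bond, with a ladder attached at a vertex `v` of one of them. -/
lemma chain_first {ω : Config d} (hg : Good ω) {N : ℕ} {bb : Fin (N + 1) → Bond d} {x : Vert d}
    (hD : ω ∈ DoubleConn 0 (bb 0).1) (hC : Chain ω N bb 0 x) :
    ((bb 0).1 = 0 → ω ∈ Osome (DF N bb 0 x)) ∧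
    ω ∈ ⋃ v : Vert d, Osome (dj (line 0 v) (dj (line v (bb 0).1) (dj (line 0 (bb 0).1)
      (DF N bb v x)))) := by
  obtain ⟨hle, α, β, a1, a2, b1, b2, a3, b3, hd⟩ := double_paths hg hD
  obtain ⟨δ, d1, hδ⟩ := chain_DF hg N bb 0 x hle hC
  constructor
  · intro h0
    obtain ⟨-, A, hA, hA'⟩ := hδ (0 : Vert d).2 le_rfl hle
    rw [d1] at hA
    exact ⟨A, hA, fun e he => (hA' e he).1⟩
  set w := (bb 0).1 with hw
  obtain ⟨s, ⟨hs1, hs2, hs3⟩, hmax⟩ := Int.exists_greatest_of_bdd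
    (P := fun s => (0 : Vert d).2 ≤ s ∧ s ≤ w.2 ∧ (δ s = α s ∨ δ s = β s))
    ⟨w.2, fun z hz => hz.2.1⟩ ⟨(0 : Vert d).2, le_rfl, hle, Or.inr (by rw [d1, b1])⟩
  obtain ⟨hδs, A, hA, hA'⟩ := hδ s hs1 hs2
  refine Set.mem_iUnion.2 ⟨δ s, ?_⟩
  have main : ∀ α β : ℤ → Vert d, α (0 : Vert d).2 = 0 → α w.2 = w → β (0 : Vert d).2 = 0 →
      β w.2 = w → IsPath ω α (0 : Vert d).2 w.2 → IsPath ω β (0 : Vert d).2 w.2 →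
      (∀ i, (0 : Vert d).2 ≤ i → i < w.2 → (α i, α (i + 1)) ≠ (β i, β (i + 1))) →
      (∀ z, (0 : Vert d).2 ≤ z → z ≤ w.2 → (δ z = α z ∨ δ z = β z) → z ≤ s) → δ s = α s →
      ω ∈ Osome (dj (line 0 (δ s)) (dj (line (δ s) w) (dj (line 0 w) (DF N bb (δ s) x)))) := by
    intro α β a1 a2 b1 b2 a3 b3 hd hmax hsα
    have hbA : ∀ γ : ℤ → Vert d, IsPath ω γ (0 : Vert d).2 w.2 → (∀ z, δ z = γ z →
        δ z = α z ∨ δ z = β z) → ∀ r u, u ≤ w.2 → (0 : Vert d).2 ≤ r → ∀ e ∈ bonds γ r u, e ∉ A := by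
      intro γ hγ hor r u hu hr e he heA
      obtain ⟨g1, g2, g3, g4⟩ := bonds_time (hγ.sub hr hu) he
      rcases (hA' e heA).2 with ⟨k1, k2⟩ | k
      · have := hmax (e.1.2 + 1) (by omega) (by omega)
          (hor _ (Prod.ext_iff.1 (k2.symm.trans g3)).2)
        omega
      · omega
    have hAα := hbA α a3 fun z hz => Or.inl hz
    have hAβ := hbA β b3 fun z hz => Or.inr hz
    have hαβ : ∀ r u, u ≤ w.2 → (0 : Vert d).2 ≤ r →
        ∀ e ∈ bonds α r u, e ∉ bonds β (0 : Vert d).2 w.2 := by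
      intro r u hu hr e he he'
      obtain ⟨g1, g2, g3, g4⟩ := bonds_time (a3.sub hr hu) he
      obtain ⟨k1, k2, k3, k4⟩ := bonds_time b3 he'
      exact hd _ k1 k2 (g3.symm.trans k3)
    refine ⟨bonds α (0 : Vert d).2 s ∪ (bonds α s w.2 ∪ (bonds β (0 : Vert d).2 w.2 ∪ A)),
      mem_dj ?_ (mem_dj ?_ (mem_dj ?_ hA ?_) ?_) ?_, ?_⟩
    · have := bonds_mem_line (γ := α) hs1
      rwa [a1, ← hsα] at this
    · have := bonds_mem_line (γ := α) hs2
      rwa [a2, ← hsα] at this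
    · have := bonds_mem_line (γ := β) hle
      rwa [b1, b2] at this
    · exact hAβ _ _ le_rfl le_rfl
    · intro e he
      rw [Finset.mem_union, not_or]
      exact ⟨hαβ s w.2 le_rfl hs1 e he, hAα s w.2 le_rfl hs1 e he⟩
    · intro e he
      simp only [Finset.mem_union, not_or]
      refine ⟨fun h => ?_, hαβ _ s hs2 le_rfl e he, hAα _ s hs2 le_rfl e he⟩
      have k1 := bonds_time (a3.sub le_rfl hs2) he
      have k2 := bonds_time (a3.sub hs1 le_rfl) h
      omega
    · intro e he
      simp only [Finset.mem_union] at he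
      rcases he with h | h | h | h
      · exact (bonds_time (a3.sub le_rfl hs2) h).2.2.2
      · exact (bonds_time (a3.sub hs1 le_rfl) h).2.2.2
      · exact (bonds_time b3 h).2.2.2
      · exact (hA' e h).1
  rcases hs3 with h | h
  · exact main α β a1 a2 b1 b2 a3 b3 hd (fun z h1 h2 h3 => hmax z ⟨h1, h2, h3⟩) h
  · exact main β α b1 b2 a1 a2 b3 a3 (fun i h1 h2 => (hd i h1 h2).symm)
      (fun z h1 h2 h3 => hmax z ⟨h1, h2, h3.symm⟩) h

/-- The lace event consists of the double connection and the chain of `E`-events. -/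
lemma lace_chain {ω : Config d} {N : ℕ} {bb : Fin (N + 1) → Bond d} {x : Vert d}
    (h : ω ∈ laceEvent (N + 1) bb x) : ω ∈ DoubleConn 0 (bb 0).1 ∧ Chain ω N bb 0 x := by
  refine ⟨h.1 (Nat.succ_pos N), ?_⟩
  have key : ∀ (N : ℕ) (bb : Fin (N + 1) → Bond d) (y : Vert d),
      (∀ i : Fin (N + 1), ω ∈ Eevent (bb i)
        (if h : i.1 + 1 < N + 1 then (bb ⟨i.1 + 1, h⟩).1 else x)
        (if h : 0 < i.1 then
          (bb ⟨i.1 - 1, lt_of_le_of_lt (Nat.sub_le _ _) i.isLt⟩).2 else y)) →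
      Chain ω N bb y x := by
    intro N
    induction N with
    | zero => intro bb y H; simpa [Chain] using H 0
    | succ N ih =>
      intro bb y H
      refine ⟨by simpa using H 0, ih _ _ fun i => ?_⟩
      have := H i.succ
      rcases i with ⟨i, hi⟩
      simp only [Fin.succ_mk, Fin.tail, Nat.add_lt_add_iff_right, Nat.succ_pos, dif_pos,
        Nat.add_sub_cancel] at this ⊢
      cases i with
      | zero => simpa using this
      | succ i => simpa using this
  exact key N bb 0 h.2

/-! ### Summing the diagrams -/

/-- The weighted bubble `B(r) = ∑ u, f(u + r) f(u) m^{τ_u}`, with `M u = m^{τ_u}`. -/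
noncomputable def bub (f M : Vert d → ℝ≥0∞) (r : Vert d) : ℝ≥0∞ :=
  ∑' u, f (u + r) * f u * M u

/-- Iterates of the ladder operator: `lad k (w - v)` bounds the sum of all ladder diagrams with
`k + 1` pivotal bonds, hanging from `v` and with first pivotal bond starting at `w`. -/
noncomputable def lad (φ f M : Vert d → ℝ≥0∞) : ℕ → Vert d → ℝ≥0∞
  | 0 => bub f M
  | k + 1 => fun r => ∑' s, (φ s * bub f M (r - s) * lad φ f M k s +
      if s = 0 then 0 else φ s * M s * bub f M (r + s) * lad φ f M k s)

/-- The weighted sum of the probabilities of the ladder diagrams. -/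
noncomputable def ladSum (μ : Measure (Config d)) (M : Vert d → ℝ≥0∞) (N : ℕ) (v w : Vert d) :
    ℝ≥0∞ :=
  ∑' a : Vert d, ∑' tl : Fin N → Bond d, ∑' x : Vert d,
    μ (Osome (DF N (Fin.cons (w, a) tl) v x)) * M x

lemma tsum_cons {N : ℕ} (F : (Fin (N + 1) → Bond d) → ℝ≥0∞) :
    ∑' bb, F bb = ∑' w : Vert d, ∑' a : Vert d, ∑' tl : Fin N → Bond d,
      F (Fin.cons (w, a) tl) := by
  calc ∑' bb, F bb = ∑' p : Bond d × (Fin N → Bond d), F (Fin.cons p.1 p.2) :=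
        ((Fin.consEquiv (fun _ : Fin (N + 1) => Bond d)).tsum_eq F).symm
    _ = ∑' b : Bond d, ∑' tl : Fin N → Bond d, F (Fin.cons b tl) :=
        ENNReal.tsum_prod (f := fun b tl => F (Fin.cons b tl))
    _ = _ := ENNReal.tsum_prod (f := fun w a => ∑' tl : Fin N → Bond d, F (Fin.cons (w, a) tl))

lemma conv_shift (f g : Vert d → ℝ≥0∞) (w z : Vert d) :
    ∑' a, f (a - w) * g (z - a) = conv f g (z - w) := by
  unfold conv
  rw [← (Equiv.subRight w).tsum_eq (fun v => f v * g (z - w - v))]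
  refine tsum_congr fun v => ?_
  simp only [Equiv.subRight_apply]
  congr 2
  abel

lemma Osome_iUnion {ι : Type*} (F : ι → Set (Finset (Bond d))) :
    Osome (⋃ i, F i) = ⋃ i, Osome (F i) := by
  ext ω
  simp only [Osome, Set.mem_iUnion, Set.mem_ofPred_eq]
  constructor
  · rintro ⟨A, ⟨i, hi⟩, h⟩
    exact ⟨i, A, hi, h⟩
  · rintro ⟨i, A, hi, h⟩
    exact ⟨A, ⟨i, hi⟩, h⟩

lemma Osome_union (F G : Set (Finset (Bond d))) : Osome (F ∪ G) ⊆ Osome F ∪ Osome G := by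
  rintro ω ⟨A, hA | hA, h⟩
  · exact Or.inl ⟨A, hA, h⟩
  · exact Or.inr ⟨A, hA, h⟩

section Sum

variable {μ : Measure (Config d)} {q : Vert d → ℝ≥0∞}
  (hμ : IsBernoulliField μ (fun u v => q (v - u)))
  (htrans : ∀ u x : Vert d, μ (connEvent u x) = μ (connEvent 0 (x - u)))

include hμ htrans

lemma measure_DF_zero (w a v x : Vert d) (tl : Fin 0 → Bond d) :
    μ (Osome (DF 0 (Fin.cons (w, a) tl) v x)) ≤
      fz μ q (x - v) * (q (a - w) * phi μ (x - a)) := by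
  simp only [DF, Fin.cons_zero]
  refine (bk hμ _ _).trans (mul_le_mul' (measure_linep hμ htrans _ _)
    ((bk hμ _ _).trans (mul_le_mul' (measure_single hμ _).le (measure_line htrans _ _).le)))

lemma measure_DF_succ {N : ℕ} (w a w' a' v x : Vert d) (tl : Fin N → Bond d) :
    μ (Osome (DF (N + 1) (Fin.cons (w, a) (Fin.cons (w', a') tl)) v x)) ≤
      ∑' v', (fz μ q (v' - v) * phi μ (w' - v') * (q (a - w) * phi μ (w' - a)) +
        if v' = w' then 0 else
          fz μ q (w' - v) * phi μ (w' - v') * (q (a - w) * phi μ (v' - a))) *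
        μ (Osome (DF N (Fin.cons (w', a') tl) v' x)) := by
  simp only [DF]
  rw [Osome_iUnion]
  refine (measure_iUnion_le _).trans (ENNReal.tsum_le_tsum fun v' => ?_)
  have h1 : (Fin.cons (w, a) (Fin.cons (w', a') tl : Fin (N + 1) → Bond d) :
      Fin (N + 2) → Bond d) 1 = (w', a') := rfl
  rw [Fin.tail_cons, h1, Fin.cons_zero]
  refine (measure_mono (Osome_union _ _)).trans ((measure_union_le _ _).trans ?_)
  rw [add_mul]
  have hl := fun u x => (measure_line htrans u x).le
  have hs := fun b => (measure_single hμ b).le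
  refine add_le_add ?_ ?_
  · refine ((bk hμ _ _).trans (mul_le_mul' (measure_linep hμ htrans _ _) ((bk hμ _ _).trans
      (mul_le_mul' (hl _ _) ((bk hμ _ _).trans (mul_le_mul' (hs _) ((bk hμ _ _).trans
        (mul_le_mul' (hl _ _) le_rfl)))))))).trans (le_of_eq ?_)
    simp only
    ring
  · split_ifs with h
    · have : Osome {C | v' ≠ w' ∧ C ∈ dj (linep v w') (dj {{(w, a)}} (dj (line a v')
        (dj (line v' w') (DF N (Fin.cons (w', a') tl) v' x))))} = ∅ := by
        ext ω
        simp [Osome, h]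
      simp only at this ⊢
      rw [this]
      simp
    · refine (measure_mono (Osome_mono fun C hC => hC.2)).trans
        (((bk hμ _ _).trans (mul_le_mul' (measure_linep hμ htrans _ _) ((bk hμ _ _).trans
        (mul_le_mul' (hs _) ((bk hμ _ _).trans (mul_le_mul' (hl _ _) ((bk hμ _ _).trans
        (mul_le_mul' (hl _ _) le_rfl)))))))).trans (le_of_eq ?_))
      simp only
      ring

lemma ladSum_succ (M : Vert d → ℝ≥0∞) (N : ℕ) (v w : Vert d) :
    ladSum μ M (N + 1) v w ≤ ∑' w', ∑' v',
      (fz μ q (v' - v) * phi μ (w' - v') * fz μ q (w' - w) +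
        if v' = w' then 0 else fz μ q (w' - v) * phi μ (w' - v') * fz μ q (v' - w)) *
        ladSum μ M N v' w' := by
  set K : Vert d → Vert d → Vert d → ℝ≥0∞ := fun a w' v' =>
    fz μ q (v' - v) * phi μ (w' - v') * (q (a - w) * phi μ (w' - a)) +
        if v' = w' then 0 else
          fz μ q (w' - v) * phi μ (w' - v') * (q (a - w) * phi μ (v' - a)) with hK
  have hsum : ∀ w' v', ∑' a, K a w' v' =
      fz μ q (v' - v) * phi μ (w' - v') * fz μ q (w' - w) +
        if v' = w' then 0 else fz μ q (w' - v) * phi μ (w' - v') * fz μ q (v' - w) := by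
    intro w' v'
    simp only [hK]
    rw [ENNReal.tsum_add, ENNReal.tsum_mul_left, conv_shift]
    split_ifs
    · simp; rfl
    · rw [ENNReal.tsum_mul_left, conv_shift]; rfl
  calc ladSum μ M (N + 1) v w
      = ∑' a, ∑' w', ∑' a', ∑' tl : Fin N → Bond d, ∑' x,
        μ (Osome (DF (N + 1) (Fin.cons (w, a) (Fin.cons (w', a') tl)) v x)) * M x := by
        unfold ladSum
        exact tsum_congr fun a => tsum_cons _
    _ ≤ ∑' a, ∑' w', ∑' a', ∑' tl : Fin N → Bond d, ∑' x, ∑' v', K a w' v' *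
        (μ (Osome (DF N (Fin.cons (w', a') tl) v' x)) * M x) := by
        refine ENNReal.tsum_le_tsum fun a => ENNReal.tsum_le_tsum fun w' =>
          ENNReal.tsum_le_tsum fun a' => ENNReal.tsum_le_tsum fun tl =>
          ENNReal.tsum_le_tsum fun x => ?_
        simp only [← mul_assoc]
        rw [ENNReal.tsum_mul_right]
        exact mul_le_mul' (measure_DF_succ hμ htrans w a w' a' v x tl) le_rfl
    _ = ∑' a, ∑' w', ∑' v', K a w' v' * ladSum μ M N v' w' := by
        refine tsum_congr fun a => tsum_congr fun w' => ?_
        have e1 : ∀ a', ∑' tl : Fin N → Bond d, ∑' x, ∑' v', K a w' v' *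
            (μ (Osome (DF N (Fin.cons (w', a') tl) v' x)) * M x) =
            ∑' v', ∑' tl : Fin N → Bond d, ∑' x, K a w' v' *
            (μ (Osome (DF N (Fin.cons (w', a') tl) v' x)) * M x) := by
          intro a'
          conv_rhs => rw [ENNReal.tsum_comm]
          exact tsum_congr fun tl => ENNReal.tsum_comm
        simp only [e1]
        rw [ENNReal.tsum_comm]
        refine tsum_congr fun v' => ?_
        simp only [ladSum, ENNReal.tsum_mul_left]
    _ = ∑' w', ∑' v', (∑' a, K a w' v') * ladSum μ M N v' w' := by
        rw [ENNReal.tsum_comm]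
        refine tsum_congr fun w' => ?_
        rw [ENNReal.tsum_comm]
        exact tsum_congr fun v' => ENNReal.tsum_mul_right
    _ = _ := by simp only [hsum]

lemma ladSum_le (M : Vert d → ℝ≥0∞) (hM : ∀ a b, M (a + b) = M a * M b) (N : ℕ) :
    ∀ v w : Vert d, ladSum μ M N v w ≤ M w * lad (phi μ) (fz μ q) M N (w - v) := by
  have hbub : ∀ w r : Vert d, ∑' z, fz μ q (z - w + r) * fz μ q (z - w) * M z =
      M w * bub (fz μ q) M r := by
    intro w r
    unfold bub
    rw [← ENNReal.tsum_mul_left, ← (Equiv.addRight w).tsum_eq]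
    refine tsum_congr fun u => ?_
    simp only [Equiv.coe_addRight, add_sub_cancel_right, hM]
    ring
  induction N with
  | zero =>
    intro v w
    calc ladSum μ M 0 v w ≤ ∑' a, ∑' x, fz μ q (x - v) * (q (a - w) * phi μ (x - a)) * M x := by
          refine ENNReal.tsum_le_tsum fun a => ?_
          rw [tsum_fintype, Finset.univ_unique, Finset.sum_singleton]
          exact ENNReal.tsum_le_tsum fun x =>
            mul_le_mul' (measure_DF_zero hμ htrans w a v x _) le_rfl
      _ = ∑' x, fz μ q (x - w + (w - v)) * fz μ q (x - w) * M x := by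
          rw [ENNReal.tsum_comm]
          refine tsum_congr fun x => ?_
          rw [ENNReal.tsum_mul_right, ENNReal.tsum_mul_left, conv_shift, sub_add_sub_cancel]
          rfl
      _ = _ := hbub w (w - v)
  | succ N ih =>
    intro v w
    refine (ladSum_succ hμ htrans M N v w).trans ?_
    calc _ ≤ ∑' w', ∑' v', (fz μ q (v' - v) * phi μ (w' - v') * fz μ q (w' - w) +
        if v' = w' then 0 else fz μ q (w' - v) * phi μ (w' - v') * fz μ q (v' - w)) *
        (M w' * lad (phi μ) (fz μ q) M N (w' - v')) :=
          ENNReal.tsum_le_tsum fun w' => ENNReal.tsum_le_tsum fun v' =>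
            mul_le_mul' le_rfl (ih v' w')
      _ = ∑' r, ∑' w', (fz μ q (w' - r - v) * phi μ r * fz μ q (w' - w) +
        if r = 0 then 0 else fz μ q (w' - v) * phi μ r * fz μ q (w' - r - w)) *
        (M w' * lad (phi μ) (fz μ q) M N r) := by
          rw [ENNReal.tsum_comm (α := Vert d)]
          rw [ENNReal.tsum_comm]
          conv_rhs => rw [ENNReal.tsum_comm]
          refine tsum_congr fun w' => ?_
          rw [← (Equiv.subLeft w').tsum_eq]
          refine tsum_congr fun r => ?_
          simp only [Equiv.subLeft_apply, sub_sub_cancel, sub_eq_self]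
      _ = ∑' r, (M w * (phi μ r * bub (fz μ q) M (w - v - r) * lad (phi μ) (fz μ q) M N r) +
          if r = 0 then 0 else
            M w * (phi μ r * M r * bub (fz μ q) M (w - v + r) * lad (phi μ) (fz μ q) M N r)) := by
          refine tsum_congr fun r => ?_
          simp only [add_mul]
          rw [ENNReal.tsum_add]
          congr 1
          · calc _ = ∑' w', phi μ r * lad (phi μ) (fz μ q) M N r *
                (fz μ q (w' - w + (w - v - r)) * fz μ q (w' - w) * M w') := by
                  refine tsum_congr fun w' => ?_
                  rw [show w' - w + (w - v - r) = w' - r - v by abel]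
                  ring
              _ = _ := by rw [ENNReal.tsum_mul_left, hbub]; ring
          · split_ifs with h
            · simp
            · calc _ = ∑' w', phi μ r * lad (phi μ) (fz μ q) M N r *
                  (fz μ q (w' - (w + r) + (w - v + r)) * fz μ q (w' - (w + r)) * M w') := by
                    refine tsum_congr fun w' => ?_
                    rw [show w' - (w + r) + (w - v + r) = w' - v by abel,
                      show w' - (w + r) = w' - r - w by abel]
                    ring
                _ = _ := by rw [ENNReal.tsum_mul_left, hbub, hM]; ring
      _ = _ := by
          simp only [lad]
          rw [← ENNReal.tsum_mul_left]
          refine tsum_congr fun r => ?_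
          rw [mul_add]
          congr 1
          split_ifs <;> simp

/-- The diagrammatic bound on the summed lace-expansion coefficient, before estimating the
diagrams in terms of the triangle. The trivial first ladder (`w = 0`) is counted separately. -/
lemma sum_piCoef_le (M : Vert d → ℝ≥0∞) (hM : ∀ a b, M (a + b) = M a * M b) (hM0 : M 0 = 1)
    (N : ℕ) :
    ∑' x, piCoef μ (N + 1) x * M x ≤ lad (phi μ) (fz μ q) M N 0 +
      ∑' w, if w = 0 then 0 else ∑' v, phi μ v * phi μ (w - v) * phi μ w *
        (M w * lad (phi μ) (fz μ q) M N (w - v)) := by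
  have hb : ∀ (bb : Fin (N + 1) → Bond d) (x : Vert d), μ (laceEvent (N + 1) bb x) ≤
      if (bb 0).1 = 0 then μ (Osome (DF N bb 0 x)) else
        ∑' v, phi μ v * phi μ ((bb 0).1 - v) * phi μ (bb 0).1 * μ (Osome (DF N bb v x)) := by
    intro bb x
    split_ifs with h0
    · refine measure_mono_ae ?_
      filter_upwards [ae_good hμ] with ω hg hω
      obtain ⟨h1, h2⟩ := lace_chain hω
      exact (chain_first hg h1 h2).1 h0
    · calc μ (laceEvent (N + 1) bb x) ≤ μ (⋃ v : Vert d, Osome (dj (line 0 v)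
            (dj (line v (bb 0).1) (dj (line 0 (bb 0).1) (DF N bb v x))))) := by
            refine measure_mono_ae ?_
            filter_upwards [ae_good hμ] with ω hg hω
            obtain ⟨h1, h2⟩ := lace_chain hω
            exact (chain_first hg h1 h2).2
        _ ≤ _ := (measure_iUnion_le _).trans (ENNReal.tsum_le_tsum fun v => ?_)
      have hl := fun u x => (measure_line htrans u x).le
      refine ((bk hμ _ _).trans (mul_le_mul' (hl _ _) ((bk hμ _ _).trans
        (mul_le_mul' (hl _ _) ((bk hμ _ _).trans (mul_le_mul' (hl _ _) le_rfl)))))).trans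
        (le_of_eq ?_)
      simp only [sub_zero]
      ring
  calc ∑' x, piCoef μ (N + 1) x * M x
      = ∑' bb : Fin (N + 1) → Bond d, ∑' x, μ (laceEvent (N + 1) bb x) * M x := by
        simp only [piCoef, ← ENNReal.tsum_mul_right]
        rw [ENNReal.tsum_comm]
    _ ≤ ∑' bb : Fin (N + 1) → Bond d, ∑' x, (if (bb 0).1 = 0 then μ (Osome (DF N bb 0 x)) else
        ∑' v, phi μ v * phi μ ((bb 0).1 - v) * phi μ (bb 0).1 * μ (Osome (DF N bb v x))) * M x :=
        ENNReal.tsum_le_tsum fun bb => ENNReal.tsum_le_tsum fun x => mul_le_mul' (hb bb x) le_rfl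
    _ = ∑' w, if w = 0 then ladSum μ M N 0 w else
        ∑' v, phi μ v * phi μ (w - v) * phi μ w * ladSum μ M N v w := by
        rw [tsum_cons]
        refine tsum_congr fun w => ?_
        simp only [Fin.cons_zero]
        split_ifs with h
        · rfl
        · simp only [ladSum, ← ENNReal.tsum_mul_left, ← ENNReal.tsum_mul_right, mul_assoc]
          conv_rhs => rw [ENNReal.tsum_comm]
          refine tsum_congr fun a => ?_
          conv_rhs => rw [ENNReal.tsum_comm]
          refine tsum_congr fun tl => ?_
          rw [ENNReal.tsum_comm]
    _ ≤ ∑' w, ((if w = 0 then lad (phi μ) (fz μ q) M N 0 else 0) +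
        if w = 0 then 0 else ∑' v, phi μ v * phi μ (w - v) * phi μ w *
        (M w * lad (phi μ) (fz μ q) M N (w - v))) := by
        refine ENNReal.tsum_le_tsum fun w => ?_
        split_ifs with h
        · rw [h, add_zero]
          simpa [hM0] using ladSum_le hμ htrans M hM N 0 0
        · rw [zero_add]
          exact ENNReal.tsum_le_tsum fun v => mul_le_mul' le_rfl (ladSum_le hμ htrans M hM N v w)
    _ = _ := by
        rw [ENNReal.tsum_add, tsum_ite_eq]

end Sum

/-! ### Weighted Cauchy–Schwarz and the Schur test -/

lemma two_mul_mul_le_sq (x y : ℝ≥0∞) : 2 * (x * y) ≤ x ^ 2 + y ^ 2 := by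
  by_cases hx : x = ⊤
  · simp [hx]
  by_cases hy : y = ⊤
  · simp [hy]
  lift x to NNReal using hx
  lift y to NNReal using hy
  norm_cast
  rw [← mul_assoc]
  exact two_mul_le_add_sq x y

lemma add_sq_le_ennreal (x y : ℝ≥0∞) : (x + y) ^ 2 ≤ 2 * x ^ 2 + 2 * y ^ 2 := by
  calc (x + y) ^ 2 = x ^ 2 + y ^ 2 + 2 * (x * y) := by ring
    _ ≤ x ^ 2 + y ^ 2 + (x ^ 2 + y ^ 2) := by gcongr; exact two_mul_mul_le_sq x y
    _ = _ := by ring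

/-- Cauchy–Schwarz for sums over an arbitrary index type, with auxiliary weights `k`. -/
lemma cs_weighted {ι : Type*} (a p k : ι → ℝ≥0∞) (hk : ∀ i, a i ≠ 0 → k i ≠ 0 ∧ k i ≠ ⊤) :
    (∑' i, a i * p i) ^ 2 ≤ (∑' i, a i * k i) * ∑' i, a i * (p i ^ 2 / k i) := by
  have h2 : 2 * (∑' i, a i * p i) ^ 2 ≤
      2 * ((∑' i, a i * k i) * ∑' i, a i * (p i ^ 2 / k i)) := by
    calc 2 * (∑' i, a i * p i) ^ 2
        = ∑' i, ∑' j, 2 * ((a i * p i) * (a j * p j)) := by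
          rw [sq]
          simp only [ENNReal.tsum_mul_left, ENNReal.tsum_mul_right]
      _ ≤ ∑' i, ∑' j, ((a i * k i) * (a j * (p j ^ 2 / k j)) +
            (a i * (p i ^ 2 / k i)) * (a j * k j)) := by
          refine ENNReal.tsum_le_tsum fun i => ENNReal.tsum_le_tsum fun j => ?_
          by_cases hi : a i = 0
          · simp [hi]
          by_cases hj : a j = 0
          · simp [hj]
          obtain ⟨i0, it⟩ := hk i hi
          obtain ⟨j0, jt⟩ := hk j hj
          have e : ∀ l, k l ≠ 0 → k l ≠ ⊤ → p l = k l * (p l / k l) := fun l h0 ht =>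
            (ENNReal.mul_div_cancel h0 ht).symm
          have e2 : ∀ l, k l ≠ 0 → k l ≠ ⊤ → p l ^ 2 / k l = k l * (p l / k l) ^ 2 := by
            intro l h0 ht
            conv_lhs => rw [e l h0 ht]
            rw [mul_pow, sq (k l), mul_assoc, mul_div_assoc, ENNReal.mul_div_cancel h0 ht]
          rw [e2 i i0 it, e2 j j0 jt]
          conv_lhs => rw [e i i0 it, e j j0 jt]
          calc _ = a i * a j * k i * k j * (2 * ((p i / k i) * (p j / k j))) := by ring
            _ ≤ a i * a j * k i * k j * ((p i / k i) ^ 2 + (p j / k j) ^ 2) :=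
              mul_le_mul' le_rfl (two_mul_mul_le_sq _ _)
            _ = _ := by ring
      _ = _ := by
          simp only [ENNReal.tsum_add, ENNReal.tsum_mul_left, ENNReal.tsum_mul_right]
          ring
  exact (ENNReal.mul_le_mul_iff_right two_ne_zero ENNReal.ofNat_ne_top).1 h2

lemma cs_plain {ι : Type*} (a p r : ι → ℝ≥0∞) :
    (∑' i, a i * p i * r i) ^ 2 ≤ (∑' i, a i * p i ^ 2) * ∑' i, a i * r i ^ 2 := by
  have h2 : 2 * (∑' i, a i * p i * r i) ^ 2 ≤
      2 * ((∑' i, a i * p i ^ 2) * ∑' i, a i * r i ^ 2) := by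
    calc 2 * (∑' i, a i * p i * r i) ^ 2
        = ∑' i, ∑' j, 2 * ((a i * p i * r i) * (a j * p j * r j)) := by
          rw [sq]
          simp only [ENNReal.tsum_mul_left, ENNReal.tsum_mul_right]
      _ ≤ ∑' i, ∑' j, ((a i * p i ^ 2) * (a j * r j ^ 2) +
            (a i * r i ^ 2) * (a j * p j ^ 2)) := by
          refine ENNReal.tsum_le_tsum fun i => ENNReal.tsum_le_tsum fun j => ?_
          calc _ = a i * a j * (2 * ((p i * r j) * (r i * p j))) := by ring
            _ ≤ a i * a j * ((p i * r j) ^ 2 + (r i * p j) ^ 2) :=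
              mul_le_mul' le_rfl (two_mul_mul_le_sq _ _)
            _ = _ := by ring
      _ = _ := by
          simp only [ENNReal.tsum_add, ENNReal.tsum_mul_left, ENNReal.tsum_mul_right]
          ring
  exact (ENNReal.mul_le_mul_iff_right two_ne_zero ENNReal.ofNat_ne_top).1 h2

lemma sq_le_sq_ennreal {x y : ℝ≥0∞} (h : x ^ 2 ≤ y ^ 2) : x ≤ y :=
  (ENNReal.pow_le_pow_left_iff two_ne_zero).1 h

section Schur

variable {ι κ : Type*} {φ h : ι → ℝ≥0∞} {A : ι → κ → ℝ≥0∞} {T : ℝ≥0∞}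
  (hh : ∀ r, h r ≠ 0 ∧ h r ≠ ⊤) (hT : T ≠ ⊤)
  (hA : ∀ r, ∑' u, A r u * ∑' r', φ r' * h r' * A r' u ≤ T * h r)

include hh hA

/-- The Schur test for the adjoint kernel: `∑ u, (∑ r, φ G A)² ≤ T ∑ r, φ G²`. -/
lemma schur_adj (G : ι → ℝ≥0∞) :
    ∑' u, (∑' r, φ r * A r u * G r) ^ 2 ≤ T * ∑' r, φ r * G r ^ 2 := by
  calc ∑' u, (∑' r, φ r * A r u * G r) ^ 2
      ≤ ∑' u, (∑' r, φ r * A r u * h r) * ∑' r, φ r * A r u * (G r ^ 2 / h r) :=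
        ENNReal.tsum_le_tsum fun u => cs_weighted _ _ _ fun r _ => hh r
    _ = ∑' r, φ r * (G r ^ 2 / h r) * ∑' u, A r u * ∑' r', φ r' * h r' * A r' u := by
        simp only [← ENNReal.tsum_mul_left]
        rw [ENNReal.tsum_comm]
        refine tsum_congr fun r => tsum_congr fun u => ?_
        simp only [← ENNReal.tsum_mul_right]
        exact tsum_congr fun r' => by ring
    _ ≤ ∑' r, φ r * (G r ^ 2 / h r) * (T * h r) :=
        ENNReal.tsum_le_tsum fun r => mul_le_mul' le_rfl (hA r)
    _ = _ := by
        rw [← ENNReal.tsum_mul_left]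
        refine tsum_congr fun r => ?_
        calc _ = T * (φ r * (h r * (G r ^ 2 / h r))) := by ring
          _ = _ := by rw [ENNReal.mul_div_cancel (hh r).1 (hh r).2]

include hT

/-- The Schur test: `∑ r, φ (∑ u, A p)² ≤ T ∑ u, p²`. -/
lemma schur (p : κ → ℝ≥0∞) :
    ∑' r, φ r * (∑' u, A r u * p u) ^ 2 ≤ T * ∑' u, p u ^ 2 := by
  set k : κ → ℝ≥0∞ := fun u => ∑' r, φ r * h r * A r u with hk
  calc ∑' r, φ r * (∑' u, A r u * p u) ^ 2
      ≤ ∑' r, φ r * ((T * h r) * ∑' u, A r u * (p u ^ 2 / k u)) := by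
        refine ENNReal.tsum_le_tsum fun r => ?_
        by_cases hr : φ r = 0
        · simp [hr]
        refine mul_le_mul' le_rfl ((cs_weighted _ _ k fun u hu => ⟨?_, ?_⟩).trans
          (mul_le_mul' (hA r) le_rfl))
        · refine fun h0 => ?_
          have := ENNReal.tsum_eq_zero.1 h0 r
          simp [hr, hu, (hh r).1] at this
        · refine fun ht => ?_
          have h1 : A r u * k u ≤ T * h r := (ENNReal.le_tsum u).trans (hA r)
          rw [ht, ENNReal.mul_top hu, top_le_iff] at h1
          exact ENNReal.mul_ne_top hT (hh r).2 h1
    _ = ∑' u, T * (p u ^ 2 / k u * k u) := by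
        simp only [hk, ← ENNReal.tsum_mul_left]
        rw [ENNReal.tsum_comm]
        refine tsum_congr fun u => tsum_congr fun r => ?_
        ring
    _ ≤ ∑' u, T * p u ^ 2 := by
        refine ENNReal.tsum_le_tsum fun u => mul_le_mul' le_rfl ?_
        rw [mul_comm]; exact ENNReal.mul_div_le
    _ = _ := ENNReal.tsum_mul_left

end Schur

/-! ### Spectral bound for the ladder operator -/

/-- The autocorrelation of `f`. -/
noncomputable def cor (f : Vert d → ℝ≥0∞) (z : Vert d) : ℝ≥0∞ := ∑' u, f (u + z) * f u

/-- The autocorrelation kernel is positive definite: it factors through shifts of `f`. -/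
lemma cor_cross (f : Vert d → ℝ≥0∞) (r s : Vert d) :
    ∑' u, f (u + r) * f (u + s) = cor f (r - s) := by
  unfold cor
  rw [← (Equiv.addRight s).tsum_eq (fun u => f (u + (r - s)) * f u)]
  refine tsum_congr fun u => ?_
  simp only [Equiv.coe_addRight]
  congr 2
  abel

lemma cor_neg (f : Vert d → ℝ≥0∞) (z : Vert d) : cor f (-z) = cor f z := by
  rw [← zero_sub, ← cor_cross]
  simp only [add_zero]
  exact tsum_congr fun u => mul_comm _ _

lemma cor_cross_sub (f : Vert d → ℝ≥0∞) (r s : Vert d) :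
    ∑' u, f (u - r) * f (u - s) = cor f (r - s) := by
  simp only [fun u => sub_eq_add_neg u r, fun u => sub_eq_add_neg u s]
  rw [cor_cross, ← cor_neg]
  congr 1
  abel

section Ladder

variable {φ f S : Vert d → ℝ≥0∞} {T : ℝ≥0∞}
  (hS : ∀ z, S z ≠ 0 ∧ S z ≠ ⊤) (hT : T ≠ ⊤)
  (hC : ∀ r, ∑' s, φ s * S s * cor f (r - s) ≤ T * S r)

include hC

/-- The kernel `f (u + r)` satisfies the hypothesis of the Schur test. -/
lemma kernel_add (r : Vert d) :
    ∑' u, f (u + r) * ∑' s, φ s * S s * f (u + s) ≤ T * S r := by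
  refine le_trans (le_of_eq ?_) (hC r)
  simp only [← cor_cross, ← ENNReal.tsum_mul_left]
  rw [ENNReal.tsum_comm]
  exact tsum_congr fun s => tsum_congr fun u => by ring

/-- The reflected kernel `f (u - r)` satisfies it as well, since `cor f` is even. -/
lemma kernel_sub (r : Vert d) :
    ∑' u, f (u - r) * ∑' s, φ s * S s * f (u - s) ≤ T * S r := by
  refine le_trans (le_of_eq ?_) (hC r)
  simp only [← cor_cross_sub, ← ENNReal.tsum_mul_left]
  rw [ENNReal.tsum_comm]
  exact tsum_congr fun s => tsum_congr fun u => by ring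

include hS hT

/-- The operator with kernel `cor f (r - s)` has norm at most `T` on `ℓ²(φ)`. -/
lemma norm_sub_op (G : Vert d → ℝ≥0∞) :
    ∑' r, φ r * (∑' s, φ s * cor f (r - s) * G s) ^ 2 ≤ T * (T * ∑' s, φ s * G s ^ 2) := by
  calc ∑' r, φ r * (∑' s, φ s * cor f (r - s) * G s) ^ 2
      = ∑' r, φ r * (∑' u, f (u + r) * ∑' s, φ s * f (u + s) * G s) ^ 2 := by
        refine tsum_congr fun r => ?_
        congr 2
        simp only [← cor_cross, ← ENNReal.tsum_mul_left, ← ENNReal.tsum_mul_right]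
        rw [ENNReal.tsum_comm]
        exact tsum_congr fun u => tsum_congr fun s => by ring
    _ ≤ T * ∑' u, (∑' s, φ s * f (u + s) * G s) ^ 2 :=
        schur (A := fun r u => f (u + r)) hS hT (kernel_add hC) _
    _ ≤ _ := mul_le_mul' le_rfl (schur_adj (A := fun r u => f (u + r)) hS (kernel_add hC) G)

/-- The operator with kernel `cor f (r + s)` has norm at most `T` on `ℓ²(φ)`. -/
lemma norm_add_op (G : Vert d → ℝ≥0∞) :
    ∑' r, φ r * (∑' s, φ s * cor f (r + s) * G s) ^ 2 ≤ T * (T * ∑' s, φ s * G s ^ 2) := by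
  calc ∑' r, φ r * (∑' s, φ s * cor f (r + s) * G s) ^ 2
      = ∑' r, φ r * (∑' u, f (u + r) * ∑' s, φ s * f (u - s) * G s) ^ 2 := by
        refine tsum_congr fun r => ?_
        congr 2
        have e : ∀ s, cor f (r + s) = ∑' u, f (u + r) * f (u - s) := fun s => by
          rw [← sub_neg_eq_add r s, ← cor_cross]
          simp only [← sub_eq_add_neg]
        simp only [e, ← ENNReal.tsum_mul_left, ← ENNReal.tsum_mul_right]
        rw [ENNReal.tsum_comm]
        exact tsum_congr fun u => tsum_congr fun s => by ring
    _ ≤ T * ∑' u, (∑' s, φ s * f (u - s) * G s) ^ 2 :=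
        schur (A := fun r u => f (u + r)) hS hT (kernel_add hC) _
    _ ≤ _ := mul_le_mul' le_rfl (schur_adj (A := fun r u => f (u - r)) hS (kernel_sub hC) G)

lemma norm_cor : ∑' r, φ r * cor f r ^ 2 ≤ T * cor f 0 := by
  refine (schur (A := fun r u => f (u + r)) hS hT (kernel_add hC) f).trans (le_of_eq ?_)
  simp only [cor, add_zero, sq]

end Ladder

section Final

variable {φ F S M : Vert d → ℝ≥0∞} {T : ℝ≥0∞}
  (hS : ∀ z, S z ≠ 0 ∧ S z ≠ ⊤) (hSa : ∀ a b, S (a + b) = S a * S b) (hS0 : S 0 = 1)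
  (hM : ∀ z, M z = S z * S z) (hφ0 : φ 0 = 1) (hφ1 : ∀ z, φ z ≤ 1)
  (hφF : ∀ z, z ≠ 0 → φ z ≤ F z) (hT : T ≠ ⊤)
  (hB : ∀ r, ∑' s, φ s * bub F M (r - s) ≤ T)

include hSa hM in
/-- Tilting by `S = √M` turns the weighted bubble into an autocorrelation. -/
lemma cor_eq (z : Vert d) : S z * bub F M z = cor (fun u => F u * S u) z := by
  unfold bub cor
  rw [← ENNReal.tsum_mul_left]
  refine tsum_congr fun u => ?_
  simp only [hM, hSa]
  ring

include hφ0 hB in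
lemma bub_le (r : Vert d) : bub F M r ≤ T := by
  refine le_trans ?_ ((ENNReal.le_tsum 0).trans (hB r))
  simp [hφ0]

include hφ1 hφF in
/-- Splitting the sum over the branching diagrams according to whether `v = 0`; in the second sum
`r = w - v`. -/
lemma branch_le (L : Vert d → ℝ≥0∞) :
    (∑' w, if w = 0 then 0 else ∑' v, φ v * φ (w - v) * φ w * (M w * L (w - v))) ≤
      (∑' w, if w = 0 then 0 else φ w * φ w * M w * L w) +
        ∑' r, φ r * bub F M (-r) * L r := by
  have hφ' : ∀ z, φ z ≤ (if z = 0 then 1 else 0) + F z := fun z => by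
    split_ifs with h
    · exact (hφ1 z).trans le_self_add
    · simpa using hφF z h
  have h1 : ∀ w, (if w = 0 then 0 else ∑' v, φ v * φ (w - v) * φ w * (M w * L (w - v))) ≤
      (if w = 0 then 0 else φ w * φ w * M w * L w) +
        ∑' r, F (w - r) * F w * M w * (φ r * L r) := fun w => by
    split_ifs with hw
    · simp
    · rw [← (Equiv.subLeft w).tsum_eq
        (fun v => φ v * φ (w - v) * φ w * (M w * L (w - v)))]
      simp only [Equiv.subLeft_apply, sub_sub_cancel]
      calc ∑' r, φ (w - r) * φ r * φ w * (M w * L r)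
          ≤ ∑' r, ((if r = w then φ w * φ w * M w * L w else 0) +
              F (w - r) * F w * M w * (φ r * L r)) := by
            refine ENNReal.tsum_le_tsum fun r => ?_
            have h2 : F (w - r) * φ r * φ w * (M w * L r) ≤
                F (w - r) * F w * M w * (φ r * L r) := by
              calc _ = F (w - r) * φ w * M w * (φ r * L r) := by ring
                _ ≤ _ := by gcongr; exact hφF w hw
            calc φ (w - r) * φ r * φ w * (M w * L r)
                ≤ ((if w - r = 0 then 1 else 0) + F (w - r)) * φ r * φ w * (M w * L r) := by
                  gcongr; exact hφ' _
              _ = (if w - r = 0 then 1 else 0) * (φ r * φ w * M w * L r) +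
                  F (w - r) * φ r * φ w * (M w * L r) := by ring
              _ ≤ _ := by
                  refine add_le_add (le_of_eq ?_) h2
                  by_cases h : r = w
                  · subst h; simp
                  · rw [if_neg h, if_neg (fun h' => h (sub_eq_zero.1 h').symm), zero_mul]
        _ = _ := by
            rw [ENNReal.tsum_add, tsum_ite_eq]
  refine (ENNReal.tsum_le_tsum h1).trans (le_of_eq ?_)
  rw [ENNReal.tsum_add, ENNReal.tsum_comm]
  congr 1
  refine tsum_congr fun r => ?_
  rw [ENNReal.tsum_mul_right, mul_right_comm, mul_comm]
  simp only [bub, sub_eq_add_neg]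

include hSa hM hB in
lemma cor_row (r : Vert d) :
    ∑' s, φ s * S s * cor (fun u => F u * S u) (r - s) ≤ T * S r := by
  calc ∑' s, φ s * S s * cor (fun u => F u * S u) (r - s)
      = (∑' s, φ s * bub F M (r - s)) * S r := by
        rw [← ENNReal.tsum_mul_right]
        refine tsum_congr fun s => ?_
        rw [← cor_eq hSa hM]
        have : S r = S (r - s) * S s := by rw [← hSa, sub_add_cancel]
        rw [this]
        ring
    _ ≤ _ := mul_le_mul' (hB r) le_rfl

include hSa hM in
/-- After tilting by `S`, the ladder operator has the kernel `cor (r - s) + cor (r + s)`. -/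
lemma lad_succ_eq (k : ℕ) (r : Vert d) :
    S r * lad φ F M (k + 1) r =
      ∑' s, (φ s * cor (fun u => F u * S u) (r - s) * (S s * lad φ F M k s) +
        if s = 0 then 0 else φ s * cor (fun u => F u * S u) (r + s) * (S s * lad φ F M k s)) := by
  simp only [lad]
  rw [← ENNReal.tsum_mul_left]
  refine tsum_congr fun s => ?_
  rw [← cor_eq hSa hM, ← cor_eq hSa hM, mul_add]
  congr 1
  · have : S r = S (r - s) * S s := by rw [← hSa, sub_add_cancel]
    rw [this]
    ring
  · split_ifs
    · simp
    · rw [hM, hSa]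
      ring

include hS hSa hS0 hM hφ0 hT hB in
/-- In `ℓ²(φ)`, every step of the ladder costs a factor `2T`. -/
lemma norm_lad_le (k : ℕ) :
    ∑' r, φ r * (S r * lad φ F M k r) ^ 2 ≤ ((2 * T) ^ k * T) ^ 2 := by
  have hC := cor_row hSa hM hB
  induction k with
  | zero =>
    simp only [lad, cor_eq hSa hM]
    refine (norm_cor hS hT hC).trans ?_
    rw [← cor_eq hSa hM, hS0, one_mul, pow_zero, one_mul, sq]
    exact mul_le_mul' le_rfl (bub_le hφ0 hB 0)
  | succ k ih =>
    set G : Vert d → ℝ≥0∞ := fun s => S s * lad φ F M k s with hG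
    calc ∑' r, φ r * (S r * lad φ F M (k + 1) r) ^ 2
        ≤ ∑' r, φ r * ((∑' s, φ s * cor (fun u => F u * S u) (r - s) * G s) +
            ∑' s, φ s * cor (fun u => F u * S u) (r + s) * G s) ^ 2 := by
          refine ENNReal.tsum_le_tsum fun r => ?_
          rw [lad_succ_eq hSa hM, ← ENNReal.tsum_add]
          gcongr with s
          split_ifs
          · simp
          · exact le_rfl
      _ ≤ ∑' r, (2 * (φ r * (∑' s, φ s * cor (fun u => F u * S u) (r - s) * G s) ^ 2) +
            2 * (φ r * (∑' s, φ s * cor (fun u => F u * S u) (r + s) * G s) ^ 2)) := by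
          refine ENNReal.tsum_le_tsum fun r =>
            (mul_le_mul' le_rfl (add_sq_le_ennreal _ _)).trans (le_of_eq ?_)
          ring
      _ ≤ 2 * (T * (T * ∑' s, φ s * G s ^ 2)) + 2 * (T * (T * ∑' s, φ s * G s ^ 2)) := by
          rw [ENNReal.tsum_add, ENNReal.tsum_mul_left, ENNReal.tsum_mul_left]
          gcongr
          · exact norm_sub_op hS hT hC G
          · exact norm_add_op hS hT hC G
      _ = (2 * T) ^ 2 * ∑' s, φ s * G s ^ 2 := by ring
      _ ≤ (2 * T) ^ 2 * ((2 * T) ^ k * T) ^ 2 := mul_le_mul' le_rfl ih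
      _ = _ := by ring

/-- The numerical step: the three contributions add up to `(1 + 2T) · 2T · g`. The square roots
are replaced by rational bounds, `2 / √3 ≤ 6 / 5` for `Y` and `2 √T ≤ 4 / 5 + 2 T` for `E`. -/
lemma three_terms {Y E D g : ℝ≥0∞} (hT : T ≠ ⊤) (hY : 3 * Y ^ 2 ≤ 4 * T ^ 2 * g ^ 2)
    (hE : E ^ 2 ≤ T * (2 * T * g) ^ 2) (hD : D ^ 2 ≤ T ^ 2 * (2 * T * g) ^ 2) :
    Y + (E + D) ≤ (1 + 2 * T) * (2 * T * g) := by
  have h1 : 10 * Y ≤ 12 * (T * g) := by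
    refine sq_le_sq_ennreal
      ((ENNReal.mul_le_mul_iff_right (a := 3) (by norm_num) ENNReal.ofNat_ne_top).1 ?_)
    calc 3 * (10 * Y) ^ 2 = 100 * (3 * Y ^ 2) := by ring
      _ ≤ 100 * (4 * T ^ 2 * g ^ 2) := mul_le_mul' le_rfl hY
      _ = 400 * (T * g) ^ 2 := by ring
      _ ≤ 432 * (T * g) ^ 2 := by gcongr; norm_num
      _ = _ := by ring
  have h2 : 5 * E ≤ (4 + 10 * T) * (T * g) := by
    refine sq_le_sq_ennreal ?_
    have h3 : 100 * T ≤ (4 + 10 * T) ^ 2 := by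
      lift T to NNReal using hT
      norm_cast
      rw [← NNReal.coe_le_coe]
      push_cast
      nlinarith [sq_nonneg ((T : ℝ) - 1 / 10)]
    calc (5 * E) ^ 2 = 25 * E ^ 2 := by ring
      _ ≤ 25 * (T * (2 * T * g) ^ 2) := mul_le_mul' le_rfl hE
      _ = (100 * T) * (T * g) ^ 2 := by ring
      _ ≤ (4 + 10 * T) ^ 2 * (T * g) ^ 2 := mul_le_mul' h3 le_rfl
      _ = _ := by ring
  have h3 : D ≤ T * (2 * T * g) := sq_le_sq_ennreal (by rw [mul_pow]; exact hD)
  refine (ENNReal.mul_le_mul_iff_right (a := 10) (by norm_num) ENNReal.ofNat_ne_top).1 ?_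
  calc 10 * (Y + (E + D)) = 10 * Y + (2 * (5 * E) + 10 * D) := by ring
    _ ≤ 12 * (T * g) + (2 * ((4 + 10 * T) * (T * g)) + 10 * (T * (2 * T * g))) := by gcongr
    _ = _ := by ring

include hS hSa hS0 hM hφ0 hφ1 hφF hT hB in
/-- The diagrammatic bound. For `N = k + 1` and `g = (2T)^k T`, the ladder hanging from the origin
contributes `2 / √3` times `T g` rather than `2` times, which makes room for the branching
diagrams with `v = 0`, of order `√T · 2 T g`. -/
lemma lad_total_le (N : ℕ) :
    lad φ F M N 0 +
      (∑' w, if w = 0 then 0 else ∑' v, φ v * φ (w - v) * φ w * (M w * lad φ F M N (w - v))) ≤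
      (1 + 2 * T) * (2 * T) ^ N * T := by
  have hC := cor_row hSa hM hB
  have hbr := branch_le (M := M) hφ1 hφF (lad φ F M N)
  have hc : bub F M 0 ≤ T := bub_le hφ0 hB 0
  have hc' : cor (fun u => F u * S u) 0 = bub F M 0 := by rw [← cor_eq hSa hM, hS0, one_mul]
  refine (add_le_add le_rfl hbr).trans ?_
  cases N with
  | zero =>
    have hE : (∑' w, if w = 0 then 0 else φ w * φ w * M w * bub F M w) ≤ T * T := by
      calc (∑' w, if w = 0 then 0 else φ w * φ w * M w * bub F M w)
          ≤ ∑' w, (F (w + 0) * F w * M w) * T := by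
            refine ENNReal.tsum_le_tsum fun w => ?_
            split_ifs with h
            · exact zero_le
            · rw [add_zero]
              have := hφF w h
              gcongr
              exact bub_le hφ0 hB w
        _ = bub F M 0 * T := ENNReal.tsum_mul_right
        _ ≤ _ := mul_le_mul' hc le_rfl
    have hD : ∑' r, φ r * bub F M (-r) * bub F M r ≤ T * T := by
      calc ∑' r, φ r * bub F M (-r) * bub F M r
          ≤ ∑' r, φ r * bub F M (0 - r) * T := by
            refine ENNReal.tsum_le_tsum fun r => ?_
            rw [zero_sub]
            exact mul_le_mul' le_rfl (bub_le hφ0 hB r)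
        _ = (∑' r, φ r * bub F M (0 - r)) * T := ENNReal.tsum_mul_right
        _ ≤ _ := mul_le_mul' (hB 0) le_rfl
    calc _ ≤ T + (T * T + T * T) := add_le_add hc (add_le_add hE hD)
      _ = _ := by ring
  | succ k =>
    have hn := norm_lad_le hS hSa hS0 hM hφ0 hT hB
    set C : Vert d → ℝ≥0∞ := cor (fun u => F u * S u) with hCdef
    have hnC : ∑' r, φ r * C r ^ 2 ≤ T * bub F M 0 := hc' ▸ norm_cor hS hT hC
    set c := bub F M 0 with hcdef
    have hg : (2 * T) ^ (k + 1) * T = 2 * T * ((2 * T) ^ k * T) := by ring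
    have hgoal : (1 + 2 * T) * (2 * T) ^ (k + 1) * T =
        (1 + 2 * T) * (2 * T * ((2 * T) ^ k * T)) := by ring
    rw [hgoal]
    have hnk := hn k
    have hnk1 := hn (k + 1)
    rw [hg] at hnk1
    refine three_terms hT ?_ ?_ ?_
    · set y : Vert d → ℝ≥0∞ := fun r => C r + if r = 0 then 0 else C r with hy
      have hY : lad φ F M (k + 1) 0 = ∑' s, φ s * y s * (S s * lad φ F M k s) := by
        have := lad_succ_eq (φ := φ) (F := F) hSa hM k 0
        rw [hS0, one_mul] at this
        rw [this]
        refine tsum_congr fun s => ?_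
        rw [zero_sub, zero_add, cor_neg, hy]
        simp only [← hCdef]
        split_ifs
        · simp
        · ring
      have hny : (∑' r, φ r * y r ^ 2) + 3 * c ^ 2 ≤ 4 * (T * c) := by
        calc (∑' r, φ r * y r ^ 2) + 3 * c ^ 2
            = ∑' r, (φ r * y r ^ 2 + if r = 0 then 3 * c ^ 2 else 0) := by
              rw [ENNReal.tsum_add, tsum_ite_eq]
          _ = ∑' r, 4 * (φ r * C r ^ 2) := by
              refine tsum_congr fun r => ?_
              simp only [hy]
              split_ifs with h
              · subst h
                rw [hφ0, hc']
                ring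
              · ring
          _ = 4 * ∑' r, φ r * C r ^ 2 := ENNReal.tsum_mul_left
          _ ≤ _ := mul_le_mul' le_rfl hnC
      -- The diagonal term `r = 0` occurs once instead of twice, which improves `4` to `4 / 3`.
      have hny' : 3 * (∑' r, φ r * y r ^ 2) ≤ 4 * T ^ 2 := by
        have hct : c ≠ ⊤ := ne_top_of_le_ne_top hT hc
        have hnt : (∑' r, φ r * y r ^ 2) ≠ ⊤ := by
          refine ne_top_of_le_ne_top ?_ (le_self_add.trans hny)
          exact ENNReal.mul_ne_top ENNReal.ofNat_ne_top (ENNReal.mul_ne_top hT hct)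
        generalize (∑' r, φ r * y r ^ 2) = n at hny hnt
        clear_value c
        clear hB hC hn hnC hnk hnk1 hg hgoal hbr
        lift T to NNReal using hT
        lift c to NNReal using hct
        lift n to NNReal using hnt
        norm_cast at hny ⊢
        rw [← NNReal.coe_le_coe] at hny ⊢
        push_cast at hny ⊢
        nlinarith [sq_nonneg (2 * (T : ℝ) - 3 * c)]
      rw [hY]
      calc _ ≤ 3 * ((∑' r, φ r * y r ^ 2) * ∑' r, φ r * (S r * lad φ F M k r) ^ 2) :=
            mul_le_mul' le_rfl (cs_plain _ _ _)
        _ = 3 * (∑' r, φ r * y r ^ 2) * ∑' r, φ r * (S r * lad φ F M k r) ^ 2 := by ring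
        _ ≤ _ := mul_le_mul' hny' hnk
    · set e : Vert d → ℝ≥0∞ := fun r => if r = 0 then 0 else φ r * S r with he
      have hE : (∑' w, if w = 0 then 0 else φ w * φ w * M w * lad φ F M (k + 1) w) =
          ∑' w, φ w * e w * (S w * lad φ F M (k + 1) w) := by
        refine tsum_congr fun w => ?_
        simp only [he, hM]
        split_ifs
        · simp
        · ring
      have hne : ∑' r, φ r * e r ^ 2 ≤ T := by
        refine le_trans ?_ hc
        rw [← hc', hCdef, cor]
        refine ENNReal.tsum_le_tsum fun r => ?_
        simp only [he, add_zero]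
        split_ifs with h
        · simp
        · calc φ r * (φ r * S r) ^ 2 ≤ 1 * (F r * S r) ^ 2 := by
                gcongr
                · exact hφ1 r
                · exact hφF r h
            _ = _ := by ring
      rw [hE]
      exact (cs_plain _ _ _).trans (mul_le_mul' hne hnk1)
    · have hD : ∑' r, φ r * bub F M (-r) * lad φ F M (k + 1) r =
          ∑' r, φ r * C r * (S r * lad φ F M (k + 1) r) := by
        refine tsum_congr fun r => ?_
        have : bub F M (-r) = S r * C r := by
          rw [hCdef, ← cor_neg, ← cor_eq hSa hM, ← mul_assoc, ← hSa, add_neg_cancel, hS0, one_mul]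
        rw [this]
        ring
      rw [hD]
      refine (cs_plain _ _ _).trans (mul_le_mul' (hnC.trans ?_) hnk1)
      rw [sq]
      exact mul_le_mul' le_rfl hc

end Final

/-! ### Specialization to oriented percolation -/

lemma phi_zero {μ : Measure (Config d)} [IsProbabilityMeasure μ] : phi μ 0 = 1 := by
  have : connEvent (0 : Vert d) 0 = Set.univ := Set.eq_univ_of_forall fun ω => Conn.refl 0
  rw [phi, this, measure_univ]

lemma phi_le_fz {μ : Measure (Config d)} {q : Vert d → ℝ≥0∞}
    (hμ : IsBernoulliField μ (fun u v => q (v - u)))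
    (htrans : ∀ u x : Vert d, μ (connEvent u x) = μ (connEvent 0 (x - u)))
    {z : Vert d} (hz : z ≠ 0) : phi μ z ≤ fz μ q z := by
  have h1 : linep (0 : Vert d) z = line 0 z := by
    ext A
    exact ⟨fun h => h.1, fun h => ⟨h, hz.symm⟩⟩
  have h2 := measure_linep hμ htrans 0 z
  rwa [h1, measure_line htrans, sub_zero] at h2

/-- The row sums of the bubble kernel are bounded by the open triangle. -/
lemma row_le_Tri {μ : Measure (Config d)} {q : Vert d → ℝ≥0∞} {m : ℝ≥0∞}
    (hm : m ≠ 0) (hm' : m ≠ ⊤) (r : Vert d) :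
    ∑' s, phi μ s * bub (fz μ q) (fun z => m ^ z.2) (r - s) ≤ Tri μ q m := by
  have hw : ∀ z, conv (wt m q) (wt m (phi μ)) z = fz μ q z * m ^ z.2 := fun z => by
    unfold fz conv wt
    rw [← ENNReal.tsum_mul_right]
    refine tsum_congr fun v => ?_
    have : m ^ z.2 = m ^ v.2 * m ^ (z - v).2 := by
      rw [← ENNReal.zpow_add hm hm']
      congr 1
      simp
    rw [this]
    ring
  refine le_trans (le_of_eq ?_) (le_iSup _ r)
  calc ∑' s, phi μ s * bub (fz μ q) (fun z => m ^ z.2) (r - s)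
      = ∑' s, ∑' v, phi μ s * (fz μ q (v - s) * fz μ q (v - r) * m ^ (v - r).2) := by
        refine tsum_congr fun s => ?_
        rw [ENNReal.tsum_mul_left]
        congr 1
        unfold bub
        rw [← (Equiv.subRight r).tsum_eq
          (fun u => fz μ q (u + (r - s)) * fz μ q u * m ^ u.2)]
        refine tsum_congr fun v => ?_
        simp only [Equiv.subRight_apply]
        rw [sub_add_sub_cancel]
    _ = _ := by
        rw [ENNReal.tsum_comm]
        refine tsum_congr fun v => ?_
        rw [hw]
        have : conv (conv q (phi μ)) (phi μ) v = ∑' s, fz μ q (v - s) * phi μ s := by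
          rw [conv, ← (Equiv.subLeft v).tsum_eq]
          refine tsum_congr fun s => ?_
          simp only [Equiv.subLeft_apply, sub_sub_cancel]
          rfl
        rw [this, ← ENNReal.tsum_mul_right]
        exact tsum_congr fun s => by ring

/-- The bound (ell=0-bd): for `N ≥ 1`,
`Σ_x π_p^{(N)}(x) m^{τ_x} ≤ (1+2T_p^{(m)}) (2T_p^{(m)})^{N-1} T_p^{(m)}`. -/
theorem stmt13 {d : ℕ} (μ : Measure (Config d)) (q : Vert d → ℝ≥0∞)
    (hμ : IsBernoulliField μ (fun u v => q (v - u)))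
    (htrans : ∀ u x : Vert d, μ (connEvent u x) = μ (connEvent 0 (x - u)))
    (N : ℕ) (hN : 1 ≤ N) (m : ℝ≥0∞) (hm : 0 < m) (hm' : m ≠ ⊤) :
    ∑' x : Vert d, piCoef μ N x * m ^ x.2 ≤
      (1 + 2 * Tri μ q m) * (2 * Tri μ q m) ^ (N - 1) * Tri μ q m := by
  obtain ⟨N, rfl⟩ : ∃ k, N = k + 1 := ⟨N - 1, by omega⟩
  have : IsProbabilityMeasure μ := hμ.1
  rw [Nat.add_sub_cancel]
  by_cases hT : Tri μ q m = ⊤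
  · rw [hT]
    have h2 : (2 : ℝ≥0∞) * ⊤ = ⊤ := ENNReal.mul_top two_ne_zero
    have h3 : (⊤ : ℝ≥0∞) ^ N ≠ 0 := pow_ne_zero _ ENNReal.top_ne_zero
    rw [h2, add_top, ENNReal.top_mul h3, ENNReal.mul_top ENNReal.top_ne_zero]
    exact le_top
  -- The tilt is by the square root of the weight.
  set s : ℝ≥0∞ := m ^ (1 / 2 : ℝ) with hs
  have hss : s * s = m := by
    rw [hs, ← ENNReal.rpow_add _ _ hm.ne' hm']
    norm_num
  have hs0 : s ≠ 0 := by
    rintro h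
    rw [h, zero_mul] at hss
    exact hm.ne hss
  have hst : s ≠ ⊤ := by
    rintro h
    rw [h, ENNReal.top_mul_top] at hss
    exact hm' hss.symm
  refine (sum_piCoef_le hμ htrans (fun z => m ^ z.2)
    (fun a b => ENNReal.zpow_add hm.ne' hm' a.2 b.2) (zpow_zero m) N).trans ?_
  refine lad_total_le (S := fun z => s ^ z.2)
    (fun z => ⟨(ENNReal.zpow_pos hs0 hst z.2).ne', (ENNReal.zpow_lt_top hs0 hst z.2).ne⟩)
    (fun a b => ENNReal.zpow_add hs0 hst a.2 b.2) (zpow_zero s) (fun z => ?_) phi_zero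
    (fun z => prob_le_one) (fun z hz => phi_le_fz hμ htrans hz) hT (row_le_Tri hm.ne' hm') N
  simp only [← hss, ← ENNReal.rpow_intCast]
  exact ENNReal.mul_rpow_of_ne_zero hs0 hs0 _
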